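/- arXiv:2201.13424 — 2 statements merged into one kernel-verified Lean document; each statement's English description precedes it below -/
import Mathlib

section
/- There exists a constant C > 0 such that for all real N ≥ 10^1000: the number of d ∈ 𝒟(N) whose number ω(d) of distinct prime factors satisfies |ω(d) − (1/2)·log log N| ≥ (log log N)^{2/3} is at most C·|𝒟(N)| / (log log N)^{1/100}. -/
/-- `𝒟`: squarefree positive integers all of whose prime divisors are `≡ 1, 2 (mod 4)`. -/
def PellD : Set ℕ :=
  {d | Squarefree d ∧ 0 < d ∧ ∀ p : ℕ, p.Prime → p ∣ d → p % 4 = 1 ∨ p % 4 = 2}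

/-!
Mertens' theorem in the residue classes modulo `4`, which rests on `L(1, χ₄) ≠ 0`, shows that the
primes `p ≡ 1, 2 (mod 4)` up to `n` satisfy `∑ 1 / p ≤ ½ log log n + O(1)`. Expanding
`log d = ∑ log p` over the primes `p ∣ d` then bounds the moments `∑ z ^ ω(d)` over `d ∈ 𝒟`,
`d ≤ n`, by `O(n (log n) ^ (z / 2 - 1))`. Multiplying small elements of `𝒟` by large primes
`p ≡ 1 (mod 4)` gives `|𝒟(n)| ≫ n / √(log n)`, so that the average of `z ^ ω(d)` is at most a
constant times `exp ((z - 1) ½ log log n)`, the probability generating function of a Poisson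
variable of mean `½ log log n`. Chernoff's inequality converts this into a Gaussian bound for the
deviations of `ω`.
-/

open Filter Finset Real Topology
open scoped ArithmeticFunction.vonMangoldt

/-! ### Partial summation -/

theorem sum_Ioc_eq_sub {M : Type*} [AddCommGroup M] (f : ℕ → M) {m n : ℕ} (hmn : m ≤ n) :
    ∑ i ∈ Ioc m n, f i = ∑ i ∈ Ioc 0 n, f i - ∑ i ∈ Ioc 0 m, f i :=
  eq_sub_of_add_eq' (sum_Ioc_consecutive f m.zero_le hmn)

theorem abs_sum_Ioc_mul_le_of_antitone {a b : ℕ → ℝ} {B : ℝ} {m : ℕ}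
    (ha : AntitoneOn a (Set.Ioi m)) (ha₀ : ∀ i > m, 0 ≤ a i)
    (hb : ∀ n ≥ m, |∑ i ∈ Ioc m n, b i| ≤ B) {n : ℕ} (hmn : m ≤ n) :
    |∑ i ∈ Ioc m n, a i * b i| ≤ a (m + 1) * B := by
  have key : ∀ n ≥ m, |∑ i ∈ Ioc m n, a i * b i - a (n + 1) * ∑ i ∈ Ioc m n, b i|
      ≤ (a (m + 1) - a (n + 1)) * B := by
    intro n hn
    induction n, hn using Nat.le_induction with
    | base => simp
    | succ n hn ih =>
      have hdrop : 0 ≤ a (n + 1) - a (n + 1 + 1) :=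
        sub_nonneg.2 (ha (by grind) (by grind) n.succ.le_succ)
      rw [sum_Ioc_succ_top (by lia), sum_Ioc_succ_top (by lia)]
      calc _ = |(∑ i ∈ Ioc m n, a i * b i - a (n + 1) * ∑ i ∈ Ioc m n, b i)
              + (a (n + 1) - a (n + 1 + 1)) * ∑ i ∈ Ioc m (n + 1), b i| := by
            rw [sum_Ioc_succ_top (by lia)]; ring_nf
        _ ≤ (a (m + 1) - a (n + 1)) * B + (a (n + 1) - a (n + 1 + 1)) * B := by
            refine (abs_add_le _ _).trans (add_le_add ih ?_)
            rw [abs_mul, abs_of_nonneg hdrop]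
            exact mul_le_mul_of_nonneg_left (hb _ (by lia)) hdrop
        _ = _ := by ring
  have hlast : |a (n + 1) * ∑ i ∈ Ioc m n, b i| ≤ a (n + 1) * B := by
    rw [abs_mul, abs_of_nonneg (ha₀ _ (by lia))]
    exact mul_le_mul_of_nonneg_left (hb n hmn) (ha₀ _ (by lia))
  grind [key n hmn]

/-! ### Mertens-type estimates -/

theorem sum_mul_log_eq_sum_mul_vonMangoldt_mul_sum {f : ℕ → ℝ}
    (hf : ∀ a b, f (a * b) = f a * f b) (N : ℕ) :
    ∑ n ∈ Ioc 0 N, f n * log n = ∑ d ∈ Ioc 0 N, f d * Λ d * ∑ m ∈ Ioc 0 (N / d), f m := by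
  let F : ArithmeticFunction ℝ := ⟨fun n ↦ f n * Λ n, by simp⟩
  let G : ArithmeticFunction ℝ := ⟨fun n ↦ if n = 0 then 0 else f n, by simp⟩
  have hF (n : ℕ) : F n = f n * Λ n := rfl
  have hG {n : ℕ} (hn : n ≠ 0) : G n = f n := if_neg hn
  have hFG (n : ℕ) : (F * G) n = f n * log n := by
    rw [ArithmeticFunction.mul_apply, ← ArithmeticFunction.vonMangoldt_sum,
      ← Nat.sum_divisorsAntidiagonal (fun i _ ↦ Λ i), mul_sum]
    refine sum_congr rfl fun x hx ↦ ?_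
    obtain ⟨rfl, hne⟩ := Nat.mem_divisorsAntidiagonal.1 hx
    rw [hF, hG (right_ne_zero_of_mul hne), hf]
    ring
  calc ∑ n ∈ Ioc 0 N, f n * log n = ∑ n ∈ Ioc 0 N, (F * G) n := by simp_rw [hFG]
    _ = ∑ d ∈ Ioc 0 N, F d * ∑ m ∈ Ioc 0 (N / d), G m :=
        ArithmeticFunction.sum_Ioc_mul_eq_sum_sum F G N
    _ = ∑ d ∈ Ioc 0 N, f d * Λ d * ∑ m ∈ Ioc 0 (N / d), f m := by
        refine sum_congr rfl fun d _ ↦ ?_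
        rw [hF, sum_congr rfl fun m hm ↦ hG (mem_Ioc.1 hm).1.ne']

theorem sum_vonMangoldt_le (N : ℕ) : ∑ n ∈ Ioc 0 N, Λ n ≤ (log 4 + 4) * N := by
  simpa [Chebyshev.psi] using Chebyshev.psi_le_const_mul_self N.cast_nonneg

theorem sum_log_eq_log_factorial (N : ℕ) : ∑ n ∈ Ioc 0 N, log n = log N.factorial := by
  rw [← Ico_add_one_add_one_eq_Ioc, zero_add, ← prod_Ico_id_eq_factorial, Nat.cast_prod,
    log_prod fun n hn ↦ Nat.cast_ne_zero.2 (by grind)]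

theorem abs_log_factorial_sub_le (N : ℕ) : |log N.factorial - N * log N| ≤ N := by
  rcases N.eq_zero_or_pos with rfl | hN
  · simp
  have hupper : log N.factorial ≤ N * log N := by
    rw [← log_pow]
    exact log_le_log (by positivity) (mod_cast N.factorial_le_pow)
  have hlower := Stirling.le_log_factorial_stirling hN.ne'
  have hpi : 0 ≤ log (2 * π) := log_nonneg (by linarith [pi_gt_three])
  rw [abs_le]
  constructor <;> linarith [log_natCast_nonneg N]

theorem cast_div_cast_le_cast_div_add_one (m n : ℕ) : (m / n : ℝ) ≤ (m / n : ℕ) + 1 := by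
  rw [← Nat.floor_div_eq_div (K := ℝ)]
  exact (Nat.lt_floor_add_one _).le

theorem abs_sum_vonMangoldt_div_sub_log_le {N : ℕ} (hN : 0 < N) :
    |∑ n ∈ Ioc 0 N, Λ n / n - log N| ≤ log 4 + 5 := by
  have hfact : log N.factorial = ∑ n ∈ Ioc 0 N, Λ n * (N / n : ℕ) := by
    rw [← sum_log_eq_log_factorial]
    simpa using sum_mul_log_eq_sum_mul_vonMangoldt_mul_sum (f := fun _ ↦ 1) (by simp) N
  have hfloor (n : ℕ) : |Λ n * (N / n) - Λ n * (N / n : ℕ)| ≤ Λ n := by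
    have h₁ : ((N / n : ℕ) : ℝ) ≤ N / n := Nat.cast_div_le
    have h₂ : (N / n : ℝ) ≤ (N / n : ℕ) + 1 := cast_div_cast_le_cast_div_add_one N n
    rw [← mul_sub, abs_of_nonneg (mul_nonneg ArithmeticFunction.vonMangoldt_nonneg (by linarith))]
    exact mul_le_of_le_one_right ArithmeticFunction.vonMangoldt_nonneg (by linarith)
  have hdiff : |∑ n ∈ Ioc 0 N, Λ n * (N / n) - log N.factorial| ≤ (log 4 + 4) * N := by
    rw [hfact, ← sum_sub_distrib]
    exact (abs_sum_le_sum_abs _ _).trans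
      ((sum_le_sum fun n _ ↦ hfloor n).trans (sum_vonMangoldt_le N))
  have hscale : N * |∑ n ∈ Ioc 0 N, Λ n / n - log N| ≤ N * (log 4 + 5) := by
    calc N * |∑ n ∈ Ioc 0 N, Λ n / n - log N|
        = |(∑ n ∈ Ioc 0 N, Λ n * (N / n) - log N.factorial)
            + (log N.factorial - N * log N)| := by
          rw [← Nat.abs_cast N, ← abs_mul, mul_sub, mul_sum, Nat.abs_cast]
          congr 1
          simp only [mul_div_left_comm, sub_add_sub_cancel]
      _ ≤ (log 4 + 4) * N + N :=
          (abs_add_le _ _).trans (add_le_add hdiff (abs_log_factorial_sub_le N))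
      _ = N * (log 4 + 5) := by ring
  exact le_of_mul_le_mul_left hscale (mod_cast hN)

section BoundedPartialSums

variable {f : ℕ → ℝ} {B : ℝ}

theorem exists_abs_sum_div_sub_le_div (hB : ∀ m n, |∑ i ∈ Ioc m n, f i| ≤ B) :
    ∃ l, ∀ m : ℕ, |∑ i ∈ Ioc 0 m, f i / i - l| ≤ B / (m + 1) := by
  have hcauchy {m n : ℕ} (hmn : m ≤ n) :
      |∑ i ∈ Ioc 0 n, f i / i - ∑ i ∈ Ioc 0 m, f i / i| ≤ B / (m + 1) := by
    rw [← sum_Ioc_eq_sub _ hmn]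
    have hanti : AntitoneOn (fun i : ℕ ↦ (i : ℝ)⁻¹) (Set.Ioi m) := fun i hi j _ hij ↦
      inv_anti₀ (Nat.cast_pos.2 (m.zero_le.trans_lt hi)) (mod_cast hij)
    simpa [div_eq_inv_mul] using
      abs_sum_Ioc_mul_le_of_antitone hanti (fun i _ ↦ by positivity) (fun n _ ↦ hB m n) hmn
  have hlim : Tendsto (fun m : ℕ ↦ 2 * (B * (1 / ((m : ℝ) + 1)))) atTop (𝓝 0) := by
    simpa using ((tendsto_one_div_add_atTop_nhds_zero_nat (𝕜 := ℝ)).const_mul B).const_mul 2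
  obtain ⟨l, hl⟩ := cauchySeq_tendsto_of_complete <| cauchySeq_of_le_tendsto_0 _
    (s := fun m : ℕ ↦ ∑ i ∈ Ioc 0 m, f i / (i : ℝ)) (fun n k m hn hk ↦ by
      refine (dist_triangle_right _ _ (∑ i ∈ Ioc 0 m, f i / (i : ℝ))).trans ?_
      rw [dist_eq, dist_eq]
      linarith [hcauchy hn, hcauchy hk, mul_one_div B ((m : ℝ) + 1)]) hlim
  refine ⟨l, fun m ↦ ?_⟩
  rw [abs_sub_comm]
  refine le_of_tendsto (hl.sub_const _).abs ?_
  filter_upwards [eventually_ge_atTop m] with n hn using hcauchy hn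

theorem abs_sum_mul_log_div_le (hB : ∀ m n, |∑ i ∈ Ioc m n, f i| ≤ B) (N : ℕ) :
    |∑ n ∈ Ioc 0 N, f n * log n / n| ≤ 2 * B := by
  have hB₀ : 0 ≤ B := (abs_nonneg _).trans (hB 0 0)
  have hlog_div (n : ℕ) : log n / n ≤ 1 := div_le_one_of_le₀ (log_le_self n.cast_nonneg) (by simp)
  have htwo : |f 2 * log 2 / 2| ≤ B := by
    have hf : |f 2| ≤ B := by simpa [show Ioc 1 2 = {2} from rfl] using hB 1 2
    have hlog : 0 ≤ log 2 / 2 ∧ log 2 / 2 ≤ 1 := ⟨by positivity, mod_cast hlog_div 2⟩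
    rw [mul_div_assoc, abs_mul, abs_of_nonneg hlog.1]
    exact (mul_le_of_le_one_right (abs_nonneg _) hlog.2).trans hf
  have hhead : ∑ n ∈ Ioc 0 2, f n * log n / n = f 2 * log 2 / 2 := by simp [sum_Ioc_succ_top]
  rcases le_or_gt N 2 with hN | hN
  · interval_cases N
    · simpa using hB₀
    · simpa using hB₀
    · rw [hhead]
      linarith
  -- `log x / x` decreases only beyond `e`, so the first two terms are split off.
  have hanti : AntitoneOn (fun n : ℕ ↦ log n / n) (Set.Ioi 2) := by
    have hexp {n : ℕ} (hn : n ∈ Set.Ioi 2) : (n : ℝ) ∈ Set.Ici (exp 1) := by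
      have : (3 : ℝ) ≤ n := mod_cast hn
      exact Set.mem_Ici.2 (by linarith [exp_one_lt_three])
    exact fun i hi j hj hij ↦ log_div_self_antitoneOn (hexp hi) (hexp hj) (mod_cast hij)
  have htail : |∑ n ∈ Ioc 2 N, log n / n * f n| ≤ log (2 + 1 : ℕ) / (2 + 1 : ℕ) * B :=
    abs_sum_Ioc_mul_le_of_antitone hanti (fun n _ ↦ by positivity) (fun n _ ↦ hB 2 n) hN.le
  rw [← sum_Ioc_consecutive _ (Nat.zero_le 2) hN.le]
  refine (abs_add_le _ _).trans ?_
  have hcomm : ∑ n ∈ Ioc 2 N, f n * log n / n = ∑ n ∈ Ioc 2 N, log n / n * f n :=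
    sum_congr rfl fun n _ ↦ by ring
  rw [hhead, hcomm]
  linarith [mul_le_of_le_one_left hB₀ (hlog_div (2 + 1))]

/-- `l` plays the role of `L(1, f)`. -/
theorem abs_mul_abs_sum_mul_vonMangoldt_div_le (hf : ∀ a b, f (a * b) = f a * f b)
    (hB : ∀ m n, |∑ i ∈ Ioc m n, f i| ≤ B) {l : ℝ}
    (hl : ∀ m : ℕ, |∑ i ∈ Ioc 0 m, f i / i - l| ≤ B / (m + 1)) (N : ℕ) :
    |l| * |∑ n ∈ Ioc 0 N, f n * Λ n / n| ≤ 2 * B + (log 4 + 4) * B ^ 2 := by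
  set E := ∑ d ∈ Ioc 0 N, f d * Λ d / d * (∑ m ∈ Ioc 0 (N / d), f m / m - l) with hE
  have hsplit : l * ∑ n ∈ Ioc 0 N, f n * Λ n / n = ∑ n ∈ Ioc 0 N, f n * log n / n - E := by
    have := sum_mul_log_eq_sum_mul_vonMangoldt_mul_sum (f := fun n ↦ f n / n)
      (fun a b ↦ by rw [hf, Nat.cast_mul, mul_div_mul_comm]) N
    simp only [div_mul_eq_mul_div] at this
    rw [this, hE, mul_sum, ← sum_sub_distrib]
    exact sum_congr rfl fun d _ ↦ by ring
  have hterm : ∀ d ∈ Ioc 0 N,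
      |f d * Λ d / d * (∑ m ∈ Ioc 0 (N / d), f m / m - l)| ≤ B ^ 2 * (Λ d / N) := by
    intro d hd
    obtain ⟨hd₀, hdN⟩ := mem_Ioc.1 hd
    have hN₀ : 0 < N := hd₀.trans_le hdN
    have hΛ : 0 ≤ Λ d := ArithmeticFunction.vonMangoldt_nonneg
    have hfd : |f d| ≤ B := by
      have : Ioc (d - 1) d = {d} := by ext; grind
      simpa [this] using hB (d - 1) d
    have hB₀ : 0 ≤ B := (abs_nonneg _).trans hfd
    rw [abs_mul, abs_div, abs_mul, abs_of_nonneg hΛ, Nat.abs_cast]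
    calc |f d| * Λ d / d * |∑ m ∈ Ioc 0 (N / d), f m / m - l|
        ≤ B * Λ d / d * (B / (N / d)) := by
          gcongr
          exact (hl _).trans (div_le_div_of_nonneg_left hB₀ (by positivity)
            (cast_div_cast_le_cast_div_add_one N d))
      _ = B ^ 2 * (Λ d / N) := by field_simp
  have hEbound : |E| ≤ (log 4 + 4) * B ^ 2 := by
    refine (abs_sum_le_sum_abs _ _).trans ((sum_le_sum hterm).trans ?_)
    rw [← mul_sum, ← sum_div, mul_comm]
    gcongr
    exact div_le_of_le_mul₀ (by positivity) (by positivity) (sum_vonMangoldt_le N)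
  rw [← abs_mul, hsplit]
  exact (abs_sub _ _).trans (add_le_add (abs_sum_mul_log_div_le hB N) hEbound)

end BoundedPartialSums

/-! ### Primes in residue classes modulo 4 -/

/-- The nontrivial Dirichlet character modulo 4, as a real-valued function on `ℕ`. -/
def chiFour (n : ℕ) : ℝ := ZMod.χ₄ n

theorem chiFour_eq (n : ℕ) : chiFour n = if n % 4 = 1 then 1 else if n % 4 = 3 then -1 else 0 := by
  rw [chiFour, ZMod.χ₄_nat_eq_if_mod_four]
  push_cast
  grind

theorem chiFour_mul (a b : ℕ) : chiFour (a * b) = chiFour a * chiFour b := by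
  rw [chiFour, Nat.cast_mul, map_mul, Int.cast_mul, chiFour, chiFour]

theorem abs_chiFour_le_one (n : ℕ) : |chiFour n| ≤ 1 := by
  grind [chiFour_eq]

theorem abs_sum_Ioc_chiFour_le_one (m n : ℕ) : |∑ i ∈ Ioc m n, chiFour i| ≤ 1 := by
  have hsum (k : ℕ) : ∑ i ∈ Ioc 0 k, chiFour i = if k % 4 = 1 ∨ k % 4 = 2 then 1 else 0 := by
    induction k with
    | zero => simp
    | succ k ih =>
      rw [sum_Ioc_succ_top k.zero_le, ih, chiFour_eq]
      grind
  rcases le_total m n with hmn | hnm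
  · rw [sum_Ioc_eq_sub _ hmn, hsum, hsum]
    split_ifs <;> simp
  · simp [Ioc_eq_empty_of_le hnm]

theorem exists_abs_sum_chiFour_mul_vonMangoldt_div_le :
    ∃ C, ∀ N, |∑ n ∈ Ioc 0 N, chiFour n * Λ n / n| ≤ C := by
  obtain ⟨l, hl⟩ := exists_abs_sum_div_sub_le_div abs_sum_Ioc_chiFour_le_one
  have hl₀ : l ≠ 0 := by
    rintro rfl
    have h := hl 3
    norm_num [sum_Ioc_succ_top, chiFour_eq] at h
  refine ⟨(2 * 1 + (log 4 + 4) * 1 ^ 2) / |l|, fun N ↦ ?_⟩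
  rw [le_div_iff₀' (abs_pos.2 hl₀)]
  exact abs_mul_abs_sum_mul_vonMangoldt_div_le chiFour_mul abs_sum_Ioc_chiFour_le_one hl N

theorem exists_sum_not_prime_vonMangoldt_div_le :
    ∃ C, ∀ N, ∑ n ∈ Ioc 0 N with ¬ n.Prime, Λ n / n ≤ C := by
  have hsummable := ArithmeticFunction.vonMangoldt.summable_residueClass_non_primes_div (0 : ZMod 1)
  have hresidue (n : ℕ) : ArithmeticFunction.vonMangoldt.residueClass (0 : ZMod 1) n = Λ n :=
    Set.indicator_of_mem (s := {m : ℕ | (m : ZMod 1) = 0}) (Subsingleton.elim _ _) _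
  simp only [hresidue] at hsummable
  refine ⟨_, fun N ↦ le_trans (le_of_eq ?_) (hsummable.sum_le_tsum (Ioc 0 N) fun n _ ↦ ?_)⟩
  · rw [sum_filter]
    exact sum_congr rfl fun n _ ↦ by split_ifs <;> simp_all
  · have := ArithmeticFunction.vonMangoldt_nonneg (n := n)
    split_ifs <;> positivity

theorem exists_abs_sum_vonMangoldt_sub_sum_primesLE_le :
    ∃ C, ∀ f : ℕ → ℝ, (∀ n, |f n| ≤ 1) → ∀ N : ℕ,
      |∑ n ∈ Ioc 0 N, f n * Λ n / n - ∑ p ∈ N.primesLE, f p * log p / p| ≤ C := by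
  obtain ⟨C, hC⟩ := exists_sum_not_prime_vonMangoldt_div_le
  refine ⟨C, fun f hf N ↦ ?_⟩
  have hprimes : ∑ p ∈ N.primesLE, f p * log p / p = ∑ p ∈ N.primesLE, f p * Λ p / p :=
    sum_congr rfl fun p hp ↦ by
      rw [ArithmeticFunction.vonMangoldt_apply_prime (Nat.prime_of_mem_primesLE hp)]
  rw [hprimes, Nat.primesLE_eq_filter_Ioc_zero, ← sum_filter_add_sum_filter_not _ Nat.Prime,
    add_sub_cancel_left]
  refine (abs_sum_le_sum_abs _ _).trans ((sum_le_sum fun n _ ↦ ?_).trans (hC N))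
  have hΛ : 0 ≤ Λ n / n := div_nonneg ArithmeticFunction.vonMangoldt_nonneg n.cast_nonneg
  rw [mul_div_assoc, abs_mul, abs_of_nonneg hΛ]
  exact mul_le_of_le_one_left hΛ (hf n)

theorem exists_abs_sum_primesLE_mod_four_sub_log_le {a : ℕ} (ha : a = 1 ∨ a = 3) :
    ∃ C, ∀ N : ℕ, 0 < N →
      |∑ p ∈ N.primesLE with p % 4 = a, log p / p - 1 / 2 * log N| ≤ C := by
  obtain ⟨C₁, hC₁⟩ := exists_abs_sum_chiFour_mul_vonMangoldt_div_le
  obtain ⟨C₂, hC₂⟩ := exists_abs_sum_vonMangoldt_sub_sum_primesLE_le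
  refine ⟨(log 4 + 5 + C₁ + 2 * C₂ + log 2) / 2, fun N hN ↦ ?_⟩
  have hone := hC₂ (fun _ ↦ 1) (by simp) N
  have hchi := hC₂ chiFour abs_chiFour_le_one N
  have hmertens := abs_sum_vonMangoldt_div_sub_log_le hN
  simp only [one_mul] at hone
  -- On primes, the indicator of the class of `a` is `(1 + χ₄(a)χ₄(p)) / 2`, except at `p = 2`.
  have hclass : ∑ p ∈ N.primesLE with p % 4 = a, log p / p
      = 1 / 2 * (∑ p ∈ N.primesLE, log p / p
        + chiFour a * ∑ p ∈ N.primesLE, chiFour p * log p / p)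
        - ∑ p ∈ N.primesLE with p = 2, log p / p / 2 := by
    rw [sum_filter, sum_filter, mul_sum, ← sum_add_distrib, mul_sum, ← sum_sub_distrib]
    refine sum_congr rfl fun p hp ↦ ?_
    have := (Nat.prime_of_mem_primesLE hp).eq_two_or_odd
    grind [chiFour_eq]
  have htwo : 0 ≤ ∑ p ∈ N.primesLE with p = 2, log p / p / 2
      ∧ ∑ p ∈ N.primesLE with p = 2, log p / p / 2 ≤ log 2 / 2 := by
    have := log_pos one_lt_two
    rw [filter_eq']
    split_ifs <;> simp only [sum_singleton, sum_empty, Nat.cast_ofNat] <;> constructor <;> linarith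
  have hchi_a : chiFour a = 1 ∨ chiFour a = -1 := by grind [chiFour_eq]
  have hchiΛ := hC₁ N
  rw [hclass, abs_le]
  rw [abs_le] at hone hchi hmertens hchiΛ
  rcases hchi_a with h | h <;> rw [h] <;> constructor <;> linarith

theorem sum_Ioc_one_inv_mul_log_le {N : ℕ} (hN : 2 ≤ N) :
    ∑ n ∈ Ioc 1 N, ((n : ℝ) * log n)⁻¹ ≤ log (log N) + 3 := by
  induction N, hN using Nat.le_induction with
  | base =>
    have hlog : 1 / 2 < log 2 := by linarith [log_two_gt_d9]
    have hinv : (log 2)⁻¹ ≤ 2 := by rw [inv_le_comm₀ (by linarith) two_pos]; linarith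
    have hloglog := one_sub_inv_le_log_of_pos (by linarith : 0 < log 2)
    rw [show Ioc 1 2 = {2} from rfl, sum_singleton, Nat.cast_ofNat, mul_inv]
    linarith
  | succ n hn ih =>
    have hlog_pos : 0 < log n := log_pos (mod_cast hn)
    have hlog_succ_pos : 0 < log (n + 1 : ℕ) := log_pos (mod_cast (by lia))
    have hratio := one_sub_inv_le_log_of_pos (div_pos hlog_succ_pos hlog_pos)
    have hdiff := one_sub_inv_le_log_of_pos (x := (n + 1 : ℕ) / (n : ℝ)) (by positivity)
    rw [log_div hlog_succ_pos.ne' hlog_pos.ne', inv_div] at hratio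
    rw [log_div (by positivity) (by positivity), inv_div] at hdiff
    have hstep : (((n + 1 : ℕ) : ℝ) * log (n + 1 : ℕ))⁻¹ ≤ 1 - log n / log (n + 1 : ℕ) := by
      rw [mul_inv, one_sub_div hlog_succ_pos.ne', ← div_eq_mul_inv]
      gcongr
      refine le_trans (le_of_eq ?_) hdiff
      push_cast
      field_simp
      ring
    rw [sum_Ioc_succ_top (by lia)]
    linarith

theorem abs_sum_Ioc_one_inv_sub_log_le_one {N : ℕ} (hN : 0 < N) :
    |∑ n ∈ Ioc 1 N, (n : ℝ)⁻¹ - log N| ≤ 1 := by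
  have hharmonic : (harmonic N : ℝ) = 1 + ∑ n ∈ Ioc 1 N, (n : ℝ)⁻¹ := by
    rw [harmonic_eq_sum_Icc, ← add_sum_Ioc_eq_sum_Icc hN]
    simp
  have hmono : log N ≤ log (N + 1 : ℕ) := log_le_log (by positivity) (by simp)
  rw [abs_le]
  constructor <;> linarith [harmonic_le_one_add_log N, log_add_one_le_harmonic N]

theorem exists_sum_div_log_le {b : ℕ → ℝ} {κ C : ℝ} (hκ : 0 ≤ κ)
    (hb : ∀ N : ℕ, 0 < N → |∑ n ∈ Ioc 1 N, b n - κ * log N| ≤ C) :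
    ∃ C', ∀ N : ℕ, 2 ≤ N → ∑ n ∈ Ioc 1 N, b n / log n ≤ κ * log (log N) + C' := by
  refine ⟨κ * 3 + (log 2)⁻¹ * (C + κ), fun N hN ↦ ?_⟩
  have hpartial (k : ℕ) (hk : 1 ≤ k) : |∑ n ∈ Ioc 1 k, (b n - κ * (n : ℝ)⁻¹)| ≤ C + κ := by
    rw [sum_sub_distrib, ← mul_sum, ← sub_sub_sub_cancel_right _ _ (κ * log k), ← mul_sub]
    refine (abs_sub _ _).trans (add_le_add (hb k hk) ?_)
    rw [abs_mul, abs_of_nonneg hκ]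
    exact mul_le_of_le_one_right hκ (abs_sum_Ioc_one_inv_sub_log_le_one hk)
  have hanti : AntitoneOn (fun n : ℕ ↦ (log n)⁻¹) (Set.Ioi 1) := fun i hi j _ hij ↦
    inv_anti₀ (log_pos (mod_cast hi))
      (log_le_log (Nat.cast_pos.2 (zero_lt_one.trans hi)) (mod_cast hij))
  have habel := abs_sum_Ioc_mul_le_of_antitone hanti (fun n _ ↦ by positivity) hpartial
    (one_le_two.trans hN)
  calc ∑ n ∈ Ioc 1 N, b n / log n
      = κ * ∑ n ∈ Ioc 1 N, ((n : ℝ) * log n)⁻¹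
        + ∑ n ∈ Ioc 1 N, (log n)⁻¹ * (b n - κ * (n : ℝ)⁻¹) := by
        rw [mul_sum, ← sum_add_distrib]
        exact sum_congr rfl fun n _ ↦ by rw [mul_inv]; ring
    _ ≤ κ * (log (log N) + 3) + (log 2)⁻¹ * (C + κ) :=
        add_le_add (mul_le_mul_of_nonneg_left (sum_Ioc_one_inv_mul_log_le hN) hκ)
          ((le_abs_self _).trans (by simpa using habel))
    _ = κ * log (log N) + (κ * 3 + (log 2)⁻¹ * (C + κ)) := by ring

theorem exists_sum_primesLE_mod_four_inv_le {a : ℕ} (ha : a = 1 ∨ a = 3) :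
    ∃ C, ∀ N : ℕ, 2 ≤ N →
      ∑ p ∈ N.primesLE with p % 4 = a, (p : ℝ)⁻¹ ≤ 1 / 2 * log (log N) + C := by
  have hsum (g : ℕ → ℝ) (N : ℕ) : ∑ p ∈ N.primesLE with p % 4 = a, g p
      = ∑ n ∈ Ioc 1 N, if n.Prime ∧ n % 4 = a then g n else 0 := by
    rw [Nat.primesLE_eq_filter_Ioc_one, filter_filter, sum_filter]
  obtain ⟨C, hC⟩ := exists_abs_sum_primesLE_mod_four_sub_log_le ha
  simp only [hsum] at hC
  obtain ⟨C', hC'⟩ := exists_sum_div_log_le one_half_pos.le hC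
  refine ⟨C', fun N hN ↦ le_trans (le_of_eq ?_) (hC' N hN)⟩
  rw [hsum]
  refine sum_congr rfl fun n hn ↦ ?_
  have : log n ≠ 0 := (log_pos (mod_cast (mem_Ioc.1 hn).1)).ne'
  split_ifs
  · field_simp
  · simp

theorem exists_sum_primesLE_mod_four_one_or_two_inv_le :
    ∃ C, ∀ N : ℕ, 2 ≤ N →
      ∑ p ∈ N.primesLE with p % 4 = 1 ∨ p % 4 = 2, (p : ℝ)⁻¹ ≤ 1 / 2 * log (log N) + C := by
  obtain ⟨C, hC⟩ := exists_sum_primesLE_mod_four_inv_le (a := 1) (.inl rfl)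
  refine ⟨C + 1, fun N hN ↦ ?_⟩
  have htwo : {p ∈ N.primesLE | p % 4 = 2} ⊆ {2} := by
    intro p hp
    have := (Nat.prime_of_mem_primesLE (mem_filter.1 hp).1).eq_two_or_odd
    grind
  have hsum_two : ∑ p ∈ N.primesLE with p % 4 = 2, (p : ℝ)⁻¹ ≤ 1 :=
    (sum_le_sum_of_subset_of_nonneg htwo fun p _ _ ↦ by positivity).trans (by norm_num)
  rw [filter_or, sum_union (disjoint_filter.2 fun p _ h ↦ by lia)]
  linarith [hC N hN]

theorem exists_div_log_le_card_primes_one_mod_four :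
    ∃ A : ℕ, 2 ≤ A ∧ ∀ y ≥ A,
      (y : ℝ) / (A * log y) ≤ #{p ∈ Ioc (y / A) y | p.Prime ∧ p % 4 = 1} := by
  obtain ⟨C, hC⟩ := exists_abs_sum_primesLE_mod_four_sub_log_le (a := 1) (.inl rfl)
  have hlarge : ∀ᶠ A : ℕ in atTop, 2 * (2 * C + 1) ≤ log A :=
    (tendsto_log_atTop.comp tendsto_natCast_atTop_atTop).eventually_ge_atTop _
  obtain ⟨A, hlogA, hA⟩ := (hlarge.and (eventually_ge_atTop 2)).exists
  refine ⟨A, hA, fun y hy ↦ ?_⟩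
  have hA₀ : (0 : ℝ) < A := by positivity
  have hy₀ : (0 : ℝ) < y := hA₀.trans_le (mod_cast hy)
  have hyA : 0 < y / A := Nat.div_pos hy (by lia)
  have hlogy : 0 < log y := log_pos (mod_cast (by lia))
  set P := {p ∈ Ioc (y / A) y | p.Prime ∧ p % 4 = 1} with hP
  have hmass : 1 ≤ ∑ p ∈ P, log p / p := by
    have hsum (k : ℕ) : ∑ p ∈ k.primesLE with p % 4 = 1, log p / p
        = ∑ n ∈ Ioc 0 k, if n.Prime ∧ n % 4 = 1 then log n / n else 0 := by
      rw [Nat.primesLE_eq_filter_Ioc_zero, filter_filter, sum_filter]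
    have hupper := hC y (by lia)
    have hlower := hC (y / A) hyA
    have hlogdiv : log (y / A : ℕ) ≤ log y - log A := by
      rw [← log_div hy₀.ne' hA₀.ne']
      exact log_le_log (mod_cast hyA) Nat.cast_div_le
    rw [hsum, abs_le] at hupper hlower
    rw [hP, sum_filter, sum_Ioc_eq_sub _ (Nat.div_le_self y A)]
    linarith
  have hterm : ∀ p ∈ P, log p / p ≤ A * log y / y := by
    intro p hp
    obtain ⟨⟨hlt, hle⟩, hprime, -⟩ := by simpa [hP] using hp
    have hp₀ : (0 : ℝ) < p := mod_cast hprime.pos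
    have hyAp : (y / A : ℝ) ≤ p :=
      (cast_div_cast_le_cast_div_add_one y A).trans (mod_cast hlt)
    calc log p / p ≤ log y / (y / A) := by gcongr
      _ = A * log y / y := by field_simp
  have hcard : 1 ≤ #P * (A * log y / y) :=
    hmass.trans ((sum_le_card_nsmul _ _ _ hterm).trans_eq (nsmul_eq_mul _ _))
  rw [div_le_iff₀ (by positivity)]
  rwa [← mul_div_assoc, one_le_div hy₀] at hcard

/-! ### Sums over squarefree numbers -/

theorem sum_prod_primeFactors_le_exp {F P : Finset ℕ} {g : ℕ → ℝ} (hg : ∀ p ∈ P, 0 ≤ g p)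
    (hF : ∀ m ∈ F, Squarefree m) (hP : ∀ m ∈ F, m.primeFactors ⊆ P) :
    ∑ m ∈ F, ∏ p ∈ m.primeFactors, g p ≤ exp (∑ p ∈ P, g p) := by
  have hinj : Set.InjOn Nat.primeFactors F := fun a ha b hb hab ↦ by
    rw [← Nat.prod_primeFactors_of_squarefree (hF a ha), hab,
      Nat.prod_primeFactors_of_squarefree (hF b hb)]
  calc ∑ m ∈ F, ∏ p ∈ m.primeFactors, g p = ∑ t ∈ F.image Nat.primeFactors, ∏ p ∈ t, g p :=
        (sum_image (f := fun t ↦ ∏ p ∈ t, g p) hinj).symm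
    _ ≤ ∑ t ∈ P.powerset, ∏ p ∈ t, g p := by
        refine sum_le_sum_of_subset_of_nonneg ?_ fun t ht _ ↦
          prod_nonneg fun p hp ↦ hg p (mem_powerset.1 ht hp)
        simpa [image_subset_iff] using hP
    _ = ∏ p ∈ P, (1 + g p) := (prod_one_add P).symm
    _ ≤ ∏ p ∈ P, exp (g p) := prod_le_prod (fun p hp ↦ add_nonneg zero_le_one (hg p hp))
        fun p _ ↦ by linarith [add_one_le_exp (g p)]
    _ = exp (∑ p ∈ P, g p) := (exp_sum P g).symm

theorem sum_pow_card_primeFactors_div_le_exp {F P : Finset ℕ} {z : ℝ} (hz : 0 ≤ z)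
    (hF : ∀ m ∈ F, Squarefree m) (hP : ∀ m ∈ F, m.primeFactors ⊆ P) :
    ∑ m ∈ F, z ^ #m.primeFactors / m ≤ exp (z * ∑ p ∈ P, (p : ℝ)⁻¹) := by
  have hterm : ∀ m ∈ F, z ^ #m.primeFactors / m = ∏ p ∈ m.primeFactors, z * (p : ℝ)⁻¹ := by
    intro m hm
    nth_rw 2 [← Nat.prod_primeFactors_of_squarefree (hF m hm)]
    rw [Nat.cast_prod, prod_mul_distrib, prod_const, prod_inv_distrib, div_eq_mul_inv]
  rw [sum_congr rfl hterm, mul_sum]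
  exact sum_prod_primeFactors_le_exp (fun p _ ↦ by positivity) hF hP

theorem card_primeFactors_prime_mul {p m : ℕ} (hp : p.Prime) (hpm : ¬ p ∣ m) :
    #(p * m).primeFactors = #m.primeFactors + 1 := by
  have hcop : p.Coprime m := (hp.coprime_iff_not_dvd).2 hpm
  rw [hcop.primeFactors_mul, card_union_of_disjoint hcop.disjoint_primeFactors, hp.primeFactors,
    card_singleton, add_comm]

theorem pow_card_primeFactors_eq_mul {M : Type*} [Monoid M] (z : M) {d p : ℕ} (hd : Squarefree d)
    (hp : p ∈ d.primeFactors) : z ^ #d.primeFactors = z * z ^ #(d / p).primeFactors := by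
  obtain ⟨hprime, ⟨m, rfl⟩, -⟩ := Nat.mem_primeFactors.1 hp
  have hpm : ¬ p ∣ m := (hprime.coprime_iff_not_dvd).1 (Nat.squarefree_mul_iff.1 hd).1
  rw [card_primeFactors_prime_mul hprime hpm, pow_succ', Nat.mul_div_cancel_left m hprime.pos]

theorem injOn_div_sigma_primeFactors (F : Finset ℕ) :
    Set.InjOn (fun x : (_ : ℕ) × ℕ ↦ (⟨x.1 / x.2, x.2⟩ : (_ : ℕ) × ℕ))
      (F.sigma Nat.primeFactors) := by
  rintro ⟨d, p⟩ hd ⟨e, q⟩ he heq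
  simp only [coe_sigma, Set.mem_sigma_iff, mem_coe, Nat.mem_primeFactors] at hd he
  simp only [Sigma.mk.injEq, heq_eq_eq] at heq ⊢
  obtain ⟨hdiv, rfl⟩ := heq
  exact ⟨by rw [← Nat.div_mul_cancel hd.2.2.1, hdiv, Nat.div_mul_cancel he.2.2.1], rfl⟩

theorem log_eq_sum_log_primeFactors {d : ℕ} (hd : Squarefree d) :
    log d = ∑ p ∈ d.primeFactors, log p := by
  nth_rw 1 [← Nat.prod_primeFactors_of_squarefree hd]
  rw [Nat.cast_prod]
  exact log_prod fun p hp ↦ Nat.cast_ne_zero.2 (Nat.prime_of_mem_primeFactors hp).ne_zero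

section DivisorClosed

variable {F : Finset ℕ} {n : ℕ} {z : ℝ}

theorem sum_pow_card_primeFactors_mul_log_le (hz : 0 ≤ z) (hsq : ∀ d ∈ F, Squarefree d)
    (hdvd : ∀ d ∈ F, ∀ m, m ∣ d → m ∈ F) (hn : ∀ d ∈ F, d ≤ n) :
    ∑ d ∈ F, z ^ #d.primeFactors * log d
      ≤ log 4 * z * n * ∑ m ∈ F, z ^ #m.primeFactors / m := by
  let split : (_ : ℕ) × ℕ → (_ : ℕ) × ℕ := fun x ↦ ⟨x.1 / x.2, x.2⟩
  let weight : (_ : ℕ) × ℕ → ℝ := fun x ↦ z * z ^ #x.1.primeFactors * log x.2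
  have hmaps : (F.sigma Nat.primeFactors).image split ⊆ F.sigma fun m ↦ (n / m).primesLE := by
    simp only [image_subset_iff, mem_sigma, Nat.mem_primeFactors, Nat.mem_primesLE]
    rintro ⟨d, p⟩ ⟨hdF, hp, hpd, hd₀⟩
    refine ⟨hdvd d hdF _ (Nat.div_dvd_of_dvd hpd), ?_, hp⟩
    rw [Nat.le_div_iff_mul_le (Nat.div_pos (Nat.le_of_dvd (by lia) hpd) hp.pos),
      Nat.mul_div_cancel' hpd]
    exact hn d hdF
  calc ∑ d ∈ F, z ^ #d.primeFactors * log d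
      = ∑ x ∈ F.sigma Nat.primeFactors, weight (split x) := by
        rw [sum_sigma]
        refine sum_congr rfl fun d hd ↦ ?_
        rw [log_eq_sum_log_primeFactors (hsq d hd), mul_sum]
        refine sum_congr rfl fun p hp ↦ ?_
        rw [pow_card_primeFactors_eq_mul z (hsq d hd) hp]
    _ ≤ ∑ x ∈ F.sigma fun m ↦ (n / m).primesLE, weight x := by
        rw [← sum_image (injOn_div_sigma_primeFactors F)]
        exact sum_le_sum_of_subset_of_nonneg hmaps fun x _ _ ↦ by positivity
    _ = ∑ m ∈ F, z * z ^ #m.primeFactors * Chebyshev.theta (n / m : ℕ) := by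
        rw [sum_sigma]
        refine sum_congr rfl fun m _ ↦ ?_
        rw [Chebyshev.theta_eq_sum_primesLE, Nat.floor_natCast, mul_sum]
    _ ≤ ∑ m ∈ F, z * z ^ #m.primeFactors * (log 4 * (n / m)) := by
        gcongr with m
        refine (Chebyshev.theta_le_log4_mul_x (Nat.cast_nonneg _)).trans ?_
        gcongr
        exact Nat.cast_div_le
    _ = log 4 * z * n * ∑ m ∈ F, z ^ #m.primeFactors / m := by
        rw [mul_sum]
        exact sum_congr rfl fun m _ ↦ by ring

theorem log_mul_sum_pow_card_primeFactors_le (hz : 0 ≤ z) (hsq : ∀ d ∈ F, Squarefree d)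
    (hdvd : ∀ d ∈ F, ∀ m, m ∣ d → m ∈ F) (hn : ∀ d ∈ F, d ≤ n) :
    log n * ∑ d ∈ F, z ^ #d.primeFactors
      ≤ (log 4 * z + 1) * n * ∑ d ∈ F, z ^ #d.primeFactors / d := by
  have hlog : ∀ d ∈ F, log n ≤ log d + n / d := by
    intro d hd
    have hd₀ : (0 : ℝ) < d := Nat.cast_pos.2 (hsq d hd).ne_zero.bot_lt
    have hn₀ : (0 : ℝ) < n := hd₀.trans_le (mod_cast hn d hd)
    have := log_le_self (div_pos hn₀ hd₀).le
    rw [log_div hn₀.ne' hd₀.ne'] at this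
    linarith
  calc log n * ∑ d ∈ F, z ^ #d.primeFactors
      ≤ ∑ d ∈ F, z ^ #d.primeFactors * (log d + n / d) := by
        rw [mul_comm, sum_mul]
        exact sum_le_sum fun d hd ↦ mul_le_mul_of_nonneg_left (hlog d hd) (by positivity)
    _ = ∑ d ∈ F, z ^ #d.primeFactors * log d + n * ∑ d ∈ F, z ^ #d.primeFactors / d := by
        rw [mul_sum, ← sum_add_distrib]
        exact sum_congr rfl fun d _ ↦ by ring
    _ ≤ log 4 * z * n * ∑ d ∈ F, z ^ #d.primeFactors / d
          + n * ∑ d ∈ F, z ^ #d.primeFactors / d := by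
        gcongr
        exact sum_pow_card_primeFactors_mul_log_le hz hsq hdvd hn
    _ = (log 4 * z + 1) * n * ∑ d ∈ F, z ^ #d.primeFactors / d := by ring

end DivisorClosed

/-! ### The counting function of `PellD` -/

namespace PellD

open Classical in
/-- The elements of `PellD` up to and including `n`, the paper's `𝒟(N)` for `n < N ≤ n + 1`. -/
noncomputable def upTo (n : ℕ) : Finset ℕ := {d ∈ Ioc 0 n | d ∈ PellD}

theorem mem_upTo {d n : ℕ} : d ∈ upTo n ↔ d ∈ PellD ∧ d ≤ n := by
  simp only [upTo, mem_filter, mem_Ioc]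
  exact ⟨fun h ↦ ⟨h.2, h.1.2⟩, fun h ↦ ⟨⟨h.1.2.1, h.2⟩, h.1⟩⟩

theorem squarefree_of_mem_upTo {d n : ℕ} (hd : d ∈ upTo n) : Squarefree d :=
  (mem_upTo.1 hd).1.1

theorem one_mem_upTo {n : ℕ} (hn : 1 ≤ n) : 1 ∈ upTo n :=
  mem_upTo.2 ⟨⟨squarefree_one, one_pos, fun _ hp hdvd ↦ (hp.one_lt.ne' (Nat.dvd_one.1 hdvd)).elim⟩,
    hn⟩

theorem mem_upTo_of_dvd {d m n : ℕ} (hd : d ∈ upTo n) (hmd : m ∣ d) : m ∈ upTo n := by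
  obtain ⟨⟨hsq, hpos, hprime⟩, hdn⟩ := mem_upTo.1 hd
  exact mem_upTo.2 ⟨⟨hsq.squarefree_of_dvd hmd, Nat.pos_of_dvd_of_pos hmd hpos,
    fun p hp hpm ↦ hprime p hp (hpm.trans hmd)⟩, (Nat.le_of_dvd hpos hmd).trans hdn⟩

theorem mul_mem {m p : ℕ} (hm : m ∈ PellD) (hp : p.Prime) (hp₄ : p % 4 = 1 ∨ p % 4 = 2)
    (hpm : ¬ p ∣ m) : m * p ∈ PellD := by
  refine ⟨Nat.squarefree_mul_iff.2 ⟨((hp.coprime_iff_not_dvd).2 hpm).symm, hm.1,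
    hp.prime.squarefree⟩, Nat.mul_pos hm.2.1 hp.pos, fun q hq hqmp ↦ ?_⟩
  obtain hqm | hqp := hq.dvd_mul.1 hqmp
  · exact hm.2.2 q hq hqm
  · rwa [(Nat.prime_dvd_prime_iff_eq hq hp).1 hqp]

theorem primeFactors_subset_primesLE {d n : ℕ} (hd : d ∈ upTo n) :
    d.primeFactors ⊆ {p ∈ n.primesLE | p % 4 = 1 ∨ p % 4 = 2} := by
  intro p hp
  obtain ⟨hprime, hpd, -⟩ := Nat.mem_primeFactors.1 hp
  obtain ⟨hdD, hdn⟩ := mem_upTo.1 hd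
  exact mem_filter.2 ⟨Nat.mem_primesLE.2 ⟨(Nat.le_of_dvd hdD.2.1 hpd).trans hdn, hprime⟩,
    hdD.2.2 p hprime hpd⟩

theorem exists_sum_pow_card_primeFactors_div_le (R : ℝ) :
    ∃ C > 0, ∀ n : ℕ, 2 ≤ n → ∀ z, 0 ≤ z → z ≤ R →
      ∑ d ∈ upTo n, z ^ #d.primeFactors / d ≤ C * log n ^ (z / 2) := by
  obtain ⟨C, hC⟩ := exists_sum_primesLE_mod_four_one_or_two_inv_le
  refine ⟨exp (R * |C|), exp_pos _, fun n hn z hz hzR ↦ ?_⟩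
  have hlog : 0 < log n := log_pos (mod_cast hn)
  calc ∑ d ∈ upTo n, z ^ #d.primeFactors / d
      ≤ exp (z * ∑ p ∈ n.primesLE with p % 4 = 1 ∨ p % 4 = 2, (p : ℝ)⁻¹) :=
        sum_pow_card_primeFactors_div_le_exp hz (fun _ ↦ squarefree_of_mem_upTo)
          fun _ ↦ primeFactors_subset_primesLE
    _ ≤ exp (z * (1 / 2 * log (log n) + |C|)) := by
        gcongr
        exact (hC n hn).trans (by gcongr; exact le_abs_self C)
    _ ≤ exp (R * |C| + log (log n) * (z / 2)) :=
        exp_le_exp.2 (by linarith [mul_le_mul_of_nonneg_right hzR (abs_nonneg C)])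
    _ = exp (R * |C|) * log n ^ (z / 2) := by rw [rpow_def_of_pos hlog, exp_add]

theorem exists_sum_pow_card_primeFactors_le {R : ℝ} (hR : 0 ≤ R) :
    ∃ C > 0, ∀ n : ℕ, 2 ≤ n → ∀ z, 0 ≤ z → z ≤ R →
      log n * ∑ d ∈ upTo n, z ^ #d.primeFactors ≤ C * n * log n ^ (z / 2) := by
  obtain ⟨C, hC₀, hC⟩ := exists_sum_pow_card_primeFactors_div_le R
  refine ⟨(log 4 * R + 1) * C, by positivity, fun n hn z hz hzR ↦ ?_⟩
  calc log n * ∑ d ∈ upTo n, z ^ #d.primeFactors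
      ≤ (log 4 * z + 1) * n * ∑ d ∈ upTo n, z ^ #d.primeFactors / d :=
        log_mul_sum_pow_card_primeFactors_le hz (fun _ ↦ squarefree_of_mem_upTo)
          (fun _ hd _ ↦ mem_upTo_of_dvd hd) fun _ hd ↦ (mem_upTo.1 hd).2
    _ ≤ (log 4 * R + 1) * n * (C * log n ^ (z / 2)) := by
        gcongr
        exact hC n hn z hz hzR
    _ = (log 4 * R + 1) * C * n * log n ^ (z / 2) := by ring

end PellD

open scoped Pointwise in
theorem sum_inv_le_sum_inv_mul_sum_inv {S A B : Finset ℕ} (hS : S ⊆ A * B) :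
    ∑ n ∈ S, (n : ℝ)⁻¹ ≤ (∑ a ∈ A, (a : ℝ)⁻¹) * ∑ b ∈ B, (b : ℝ)⁻¹ := by
  calc ∑ n ∈ S, (n : ℝ)⁻¹ ≤ ∑ n ∈ A * B, (n : ℝ)⁻¹ :=
        sum_le_sum_of_subset_of_nonneg hS fun n _ _ ↦ by positivity
    _ ≤ ∑ x ∈ A ×ˢ B, ((x.1 * x.2 : ℕ) : ℝ)⁻¹ := by
        rw [← image_mul_product]
        exact sum_image_le_of_nonneg fun x _ ↦ by positivity
    _ = (∑ a ∈ A, (a : ℝ)⁻¹) * ∑ b ∈ B, (b : ℝ)⁻¹ := by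
        simp_rw [sum_mul_sum, sum_product, Nat.cast_mul, mul_inv]

theorem log_le_sum_Icc_inv (M : ℕ) : log M ≤ ∑ n ∈ Icc 1 M, (n : ℝ)⁻¹ := by
  obtain rfl | hM := M.eq_zero_or_pos
  · simp
  · have := log_add_one_le_harmonic M
    rw [harmonic_eq_sum_Icc] at this
    push_cast at this
    exact (log_le_log (mod_cast hM) (by simp)).trans this

theorem exists_log_le_mul_sum_squarefree_inv :
    ∃ Z > 0, ∀ M : ℕ, log M ≤ Z * ∑ a ∈ Icc 1 M with Squarefree a, (a : ℝ)⁻¹ := by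
  have hsum : Summable fun s : ℕ ↦ ((s ^ 2 : ℕ) : ℝ)⁻¹ := by
    simp
  refine ⟨∑' s : ℕ, ((s ^ 2 : ℕ) : ℝ)⁻¹, hsum.tsum_pos (fun s ↦ by positivity) 1 (by simp),
    fun M ↦ (log_le_sum_Icc_inv M).trans ?_⟩
  calc ∑ n ∈ Icc 1 M, (n : ℝ)⁻¹
      ≤ (∑ s ∈ ((Icc 1 M).image (· ^ 2) : Finset ℕ), (s : ℝ)⁻¹)
          * ∑ a ∈ Icc 1 M with Squarefree a, (a : ℝ)⁻¹ := by
        refine sum_inv_le_sum_inv_mul_sum_inv fun n hn ↦ ?_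
        obtain ⟨hn₁, hnM⟩ := mem_Icc.1 hn
        obtain ⟨a, s, rfl, hsq⟩ := Nat.sq_mul_squarefree n
        have ha₀ : 0 < a := hsq.ne_zero.bot_lt
        have hs₀ : 0 < s := Nat.pos_of_ne_zero fun h ↦ by simp [h] at hn₁
        have hs₂ : 0 < s ^ 2 := Nat.pow_pos hs₀
        refine mem_mul.2 ⟨s ^ 2, mem_image_of_mem _ (mem_Icc.2 ⟨hs₀, ?_⟩), a,
          mem_filter.2 ⟨mem_Icc.2 ⟨ha₀, ?_⟩, hsq⟩, rfl⟩
        · exact (Nat.le_self_pow two_ne_zero s).trans ((Nat.le_mul_of_pos_right _ ha₀).trans hnM)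
        · exact (Nat.le_mul_of_pos_left _ hs₂).trans hnM
    _ ≤ (∑' s : ℕ, ((s ^ 2 : ℕ) : ℝ)⁻¹) * ∑ a ∈ Icc 1 M with Squarefree a, (a : ℝ)⁻¹ := by
        gcongr
        exact (sum_image_le_of_nonneg fun s _ ↦ by positivity).trans
          (hsum.sum_le_tsum _ fun s _ ↦ by positivity)

theorem exists_sum_squarefree_mod_four_eq_three_inv_le :
    ∃ C > 0, ∀ M : ℕ, 2 ≤ M →
      ∑ k ∈ Icc 1 M with Squarefree k ∧ ∀ p ∈ k.primeFactors, p % 4 = 3, (k : ℝ)⁻¹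
        ≤ C * √(log M) := by
  obtain ⟨C, hC⟩ := exists_sum_primesLE_mod_four_inv_le (a := 3) (.inr rfl)
  refine ⟨exp C, exp_pos C, fun M hM ↦ ?_⟩
  calc ∑ k ∈ Icc 1 M with Squarefree k ∧ ∀ p ∈ k.primeFactors, p % 4 = 3, (k : ℝ)⁻¹
      = ∑ k ∈ Icc 1 M with Squarefree k ∧ ∀ p ∈ k.primeFactors, p % 4 = 3,
          1 ^ #k.primeFactors / (k : ℝ) := by
        simp only [one_pow, one_div]
    _ ≤ exp (1 * ∑ p ∈ M.primesLE with p % 4 = 3, (p : ℝ)⁻¹) := by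
        refine sum_pow_card_primeFactors_div_le_exp zero_le_one
          (fun k hk ↦ (mem_filter.1 hk).2.1) fun k hk p hp ↦ ?_
        obtain ⟨hkM, -, hk₃⟩ := mem_filter.1 hk
        exact mem_filter.2 ⟨Nat.mem_primesLE.2 ⟨(Nat.le_of_mem_primeFactors hp).trans
          (mem_Icc.1 hkM).2, Nat.prime_of_mem_primeFactors hp⟩, hk₃ p hp⟩
    _ ≤ exp (C + log (log M) * (1 / 2)) := exp_le_exp.2 (by linarith [hC M hM])
    _ = exp C * √(log M) := by
        rw [exp_add, sqrt_eq_rpow, rpow_def_of_pos (log_pos (mod_cast hM))]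

namespace PellD

theorem exists_mul_eq_of_squarefree {a : ℕ} (ha : Squarefree a) :
    ∃ m ∈ PellD, ∃ k, (∀ p ∈ k.primeFactors, p % 4 = 3) ∧ m * k = a := by
  set m := ∏ p ∈ a.primeFactors with ¬ p % 4 = 3, p
  set k := ∏ p ∈ a.primeFactors with p % 4 = 3, p
  have hmk : m * k = a := by
    rw [mul_comm, prod_filter_mul_prod_filter_not, Nat.prod_primeFactors_of_squarefree ha]
  have hdvd (r : ℕ → Prop) [DecidablePred r] {q : ℕ} (hq : q.Prime)
      (hqr : q ∣ ∏ p ∈ a.primeFactors with r p, p) : r q := by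
    obtain ⟨p, hp, hqp⟩ := (hq.prime.dvd_finsetProd_iff _).1 hqr
    obtain ⟨hpa, hrp⟩ := mem_filter.1 hp
    rwa [(Nat.prime_dvd_prime_iff_eq hq (Nat.prime_of_mem_primeFactors hpa)).1 hqp]
  have hm : Squarefree m := ha.squarefree_of_dvd ⟨k, hmk.symm⟩
  refine ⟨m, ⟨hm, hm.ne_zero.bot_lt, fun q hq hqm ↦ ?_⟩, k, fun q hq ↦ ?_, hmk⟩
  · have := hdvd (¬ · % 4 = 3) hq hqm
    obtain rfl | hodd := hq.eq_two_or_odd <;> lia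
  · exact hdvd (· % 4 = 3) (Nat.prime_of_mem_primeFactors hq) (Nat.dvd_of_mem_primeFactors hq)

theorem sum_squarefree_inv_le (M : ℕ) :
    ∑ a ∈ Icc 1 M with Squarefree a, (a : ℝ)⁻¹
      ≤ (∑ m ∈ upTo M, (m : ℝ)⁻¹)
        * ∑ k ∈ Icc 1 M with Squarefree k ∧ ∀ p ∈ k.primeFactors, p % 4 = 3, (k : ℝ)⁻¹ := by
  refine sum_inv_le_sum_inv_mul_sum_inv fun a ha ↦ ?_
  obtain ⟨haM, hsq⟩ := mem_filter.1 ha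
  obtain ⟨m, hm, k, hk, rfl⟩ := exists_mul_eq_of_squarefree hsq
  have hk₀ : 0 < k := hsq.of_mul_right.ne_zero.bot_lt
  have hmkM : m * k ≤ M := (mem_Icc.1 haM).2
  exact mem_mul.2 ⟨m, mem_upTo.2 ⟨hm, (Nat.le_mul_of_pos_right m hk₀).trans hmkM⟩, k,
    mem_filter.2 ⟨mem_Icc.2 ⟨hk₀, (Nat.le_mul_of_pos_left k hm.2.1).trans hmkM⟩,
      hsq.of_mul_right, hk⟩, rfl⟩

theorem exists_mul_sqrt_log_le_sum_inv :
    ∃ c > 0, ∀ M : ℕ, 2 ≤ M → c * √(log M) ≤ ∑ m ∈ upTo M, (m : ℝ)⁻¹ := by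
  obtain ⟨C, hC₀, hC⟩ := exists_sum_squarefree_mod_four_eq_three_inv_le
  obtain ⟨Z, hZ₀, hZ⟩ := exists_log_le_mul_sum_squarefree_inv
  refine ⟨(Z * C)⁻¹, by positivity, fun M hM ↦ ?_⟩
  have hlog : 0 < log M := log_pos (mod_cast hM)
  have hbound : √(log M) * √(log M) ≤ Z * C * (∑ m ∈ upTo M, (m : ℝ)⁻¹) * √(log M) := by
    calc √(log M) * √(log M) = log M := mul_self_sqrt hlog.le
      _ ≤ Z * ((∑ m ∈ upTo M, (m : ℝ)⁻¹) * (C * √(log M))) := by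
        refine (hZ M).trans ?_
        gcongr
        exact (sum_squarefree_inv_le M).trans (by gcongr; exact hC M hM)
      _ = Z * C * (∑ m ∈ upTo M, (m : ℝ)⁻¹) * √(log M) := by ring
  rw [inv_mul_le_iff₀ (by positivity)]
  exact le_of_mul_le_mul_right hbound (sqrt_pos.2 hlog)

theorem sum_card_primes_le_card_upTo (M n : ℕ) :
    ∑ m ∈ upTo M, #{p ∈ Ioc M (n / m) | p.Prime ∧ p % 4 = 1} ≤ #(upTo n) := by
  rw [← card_sigma]
  -- `p` is the only prime factor of `m * p` that exceeds `M`.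
  refine card_le_card_of_injOn (fun x ↦ x.1 * x.2) ?_ ?_
  · rintro ⟨m, p⟩ hx
    obtain ⟨hm, hp⟩ := mem_sigma.1 hx
    obtain ⟨hpM, hprime, hp₄⟩ := mem_filter.1 hp
    obtain ⟨hmD, hmM⟩ := mem_upTo.1 hm
    obtain ⟨hMp, hpn⟩ := mem_Ioc.1 hpM
    refine mem_upTo.2 ⟨mul_mem hmD hprime (.inl hp₄) fun hpm ↦ ?_, ?_⟩
    · exact (hmM.trans_lt hMp).not_ge (Nat.le_of_dvd hmD.2.1 hpm)
    · exact (Nat.mul_le_mul_left m hpn).trans (Nat.mul_div_le n m)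
  · rintro ⟨m, p⟩ hx ⟨m', p'⟩ hx' (heq : m * p = m' * p')
    simp only [coe_sigma, Set.mem_sigma_iff, mem_coe, mem_upTo, mem_filter, mem_Ioc] at hx hx'
    obtain ⟨-, ⟨hMp, -⟩, hp, -⟩ := hx
    obtain ⟨⟨hm', hm'M⟩, -, hp', -⟩ := hx'
    have hpm' : ¬ p ∣ m' := fun h ↦ (hm'M.trans_lt hMp).not_ge (Nat.le_of_dvd hm'.2.1 h)
    obtain rfl : p = p' := (Nat.prime_dvd_prime_iff_eq hp hp').1
      ((hp.dvd_mul.1 (heq ▸ dvd_mul_left p m)).resolve_left hpm')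
    rw [Nat.eq_of_mul_eq_mul_right hp.pos heq]

theorem exists_mul_sum_inv_le_card_upTo :
    ∃ A : ℕ, 2 ≤ A ∧ ∀ M n : ℕ, A ≤ M → A * M ^ 2 ≤ n →
      n / (2 * A) * ∑ m ∈ upTo M, (m : ℝ)⁻¹ ≤ log n * #(upTo n) := by
  obtain ⟨A, hA, hprimes⟩ := exists_div_log_le_card_primes_one_mod_four
  refine ⟨A, hA, fun M n hAM hn ↦ ?_⟩
  have hn₂ : 2 ≤ n := by nlinarith
  have hlogn : 0 < log n := log_pos (mod_cast hn₂)
  have hterm : ∀ m ∈ upTo M, n / (2 * A) * (m : ℝ)⁻¹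
      ≤ log n * #{p ∈ Ioc M (n / m) | p.Prime ∧ p % 4 = 1} := by
    intro m hm
    obtain ⟨hmD, hmM⟩ := mem_upTo.1 hm
    have hMn : M ≤ n / m / A := by
      rw [Nat.div_div_eq_div_mul, Nat.le_div_iff_mul_le (Nat.mul_pos hmD.2.1 (by lia))]
      nlinarith
    have hAy : A ≤ n / m := hAM.trans (hMn.trans (Nat.div_le_self _ _))
    have hy : (1 : ℝ) ≤ (n / m : ℕ) := mod_cast (by lia)
    have hlogy : 0 < log (n / m : ℕ) := log_pos (mod_cast hA.trans hAy)
    calc n / (2 * A) * (m : ℝ)⁻¹ = (n / m : ℝ) / 2 / A := by field_simp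
      _ ≤ (n / m : ℕ) / A := by
          gcongr
          linarith [cast_div_cast_le_cast_div_add_one n m]
      _ = log (n / m : ℕ) * ((n / m : ℕ) / (A * log (n / m : ℕ))) := by field_simp
      _ ≤ log n * #{p ∈ Ioc (n / m / A) (n / m) | p.Prime ∧ p % 4 = 1} := by
          gcongr
          · exact Nat.div_le_self n m
          · exact hprimes _ hAy
      _ ≤ log n * #{p ∈ Ioc M (n / m) | p.Prime ∧ p % 4 = 1} := by gcongr
  calc n / (2 * A) * ∑ m ∈ upTo M, (m : ℝ)⁻¹
      ≤ log n * ∑ m ∈ upTo M, (#{p ∈ Ioc M (n / m) | p.Prime ∧ p % 4 = 1} : ℝ) := by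
        simp only [mul_sum]
        exact sum_le_sum hterm
    _ ≤ log n * #(upTo n) := by
        gcongr
        exact_mod_cast sum_card_primes_le_card_upTo M n

theorem eventually_mul_sqrt_log_le_log_mul_card_upTo :
    ∃ c > 0, ∀ᶠ n : ℕ in atTop, c * n * √(log n) ≤ log n * #(upTo n) := by
  obtain ⟨A, hA, hcard⟩ := exists_mul_sum_inv_le_card_upTo
  obtain ⟨c, hc₀, hc⟩ := exists_mul_sqrt_log_le_sum_inv
  refine ⟨c / (2 * A * √5), by positivity, ?_⟩
  filter_upwards [eventually_ge_atTop (A ^ 3)] with n hn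
  set M := (n / A).sqrt with hM
  have hAM : A ≤ M := by
    rw [hM, Nat.le_sqrt', Nat.le_div_iff_mul_le (by lia)]
    exact hn
  have hMn : A * M ^ 2 ≤ n :=
    (Nat.mul_le_mul_left A (Nat.sqrt_le' _)).trans (Nat.mul_div_le n A)
  have hnM : n ≤ M ^ 5 := by
    have hlt : n < (M + 1) ^ 2 * A := (Nat.div_lt_iff_lt_mul (by lia)).1 (Nat.lt_succ_sqrt' _)
    calc n ≤ (M + 1) ^ 2 * A := hlt.le
      _ ≤ (M ^ 2) ^ 2 * M := by gcongr; nlinarith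
      _ = M ^ 5 := by ring
  have hn₀ : 0 < n := (Nat.pow_pos (by lia)).trans_le hn
  have hlog : log n ≤ 5 * log M := by
    rw [← Nat.cast_ofNat, ← log_pow]
    exact log_le_log (mod_cast hn₀) (mod_cast hnM)
  calc c / (2 * A * √5) * n * √(log n)
      ≤ c / (2 * A * √5) * n * √(5 * log M) := by gcongr
    _ = n / (2 * A) * (c * √(log M)) := by
        rw [sqrt_mul (by norm_num)]
        field_simp
    _ ≤ n / (2 * A) * ∑ m ∈ upTo M, (m : ℝ)⁻¹ := by
        gcongr
        exact hc M (hA.trans hAM)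
    _ ≤ log n * #(upTo n) := hcard M n hAM hMn

theorem exists_mul_sqrt_log_le_log_mul_card_upTo :
    ∃ c > 0, ∀ n : ℕ, 2 ≤ n → c * n * √(log n) ≤ log n * #(upTo n) := by
  obtain ⟨c, hc₀, hc⟩ := eventually_mul_sqrt_log_le_log_mul_card_upTo
  obtain ⟨n₀, hn₀⟩ := eventually_atTop.1 hc
  refine ⟨min c (√(log 2) / (n₀ + 1)), by positivity, fun n hn ↦ ?_⟩
  obtain hlarge | hsmall := le_or_gt n₀ n
  · exact le_trans (by gcongr; exact min_le_left _ _) (hn₀ n hlarge)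
  have hcard : (1 : ℝ) ≤ #(upTo n) := mod_cast card_pos.2 ⟨1, one_mem_upTo (by lia)⟩
  have hlogn : 0 ≤ log n := log_natCast_nonneg n
  calc min c (√(log 2) / (n₀ + 1)) * n * √(log n)
      ≤ √(log 2) / (n₀ + 1) * (n₀ + 1) * √(log n) := by
        gcongr
        · exact min_le_right _ _
        · exact_mod_cast (by lia : n ≤ n₀ + 1)
    _ = √(log 2) * √(log n) := by rw [div_mul_cancel₀ _ (by positivity)]
    _ ≤ √(log n) * √(log n) := by
        gcongr
        exact_mod_cast hn
    _ = log n * 1 := by rw [mul_self_sqrt hlogn, mul_one]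
    _ ≤ log n * #(upTo n) := by gcongr

theorem exists_sum_pow_card_primeFactors_le_card_upTo {R : ℝ} (hR : 0 ≤ R) :
    ∃ C > 0, ∀ n : ℕ, 2 ≤ n → ∀ z, 0 ≤ z → z ≤ R →
      ∑ d ∈ upTo n, z ^ #d.primeFactors ≤ C * #(upTo n) * log n ^ ((z - 1) / 2) := by
  obtain ⟨C, hC₀, hC⟩ := exists_sum_pow_card_primeFactors_le hR
  obtain ⟨c, hc₀, hc⟩ := exists_mul_sqrt_log_le_log_mul_card_upTo
  refine ⟨C / c, by positivity, fun n hn z hz hzR ↦ ?_⟩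
  have hlog : 0 < log n := log_pos (mod_cast hn)
  refine le_of_mul_le_mul_left ?_ hlog
  calc log n * ∑ d ∈ upTo n, z ^ #d.primeFactors ≤ C * n * log n ^ (z / 2) := hC n hn z hz hzR
    _ = C / c * (c * n * √(log n)) * log n ^ ((z - 1) / 2) := by
        rw [show z / 2 = 1 / 2 + (z - 1) / 2 by ring, rpow_add hlog, ← sqrt_eq_rpow]
        field_simp
    _ ≤ C / c * (log n * #(upTo n)) * log n ^ ((z - 1) / 2) := by
        gcongr C / c * ?_ * _
        exact hc n hn
    _ = log n * (C / c * #(upTo n) * log n ^ ((z - 1) / 2)) := by ring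

end PellD

/-! ### Chernoff bounds -/

section Chernoff

variable {ι : Type*} {F : Finset ι} {f : ι → ℝ} {K μ T : ℝ}

theorem card_mul_le_mul_sub_le_mul_exp {t : ℝ} (ht : |t| ≤ 1) (hK : 0 ≤ K) (hμ : 0 ≤ μ)
    (hF : ∑ i ∈ F, exp (t * f i) ≤ K * exp ((exp t - 1) * μ)) :
    (#{i ∈ F | |t| * T ≤ t * (f i - μ)} : ℝ) ≤ K * exp (t ^ 2 * μ - |t| * T) := by
  have hexp : exp t - 1 ≤ t + t ^ 2 := by
    linarith [(abs_le.1 (abs_exp_sub_one_sub_id_le ht)).2]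
  have hmarkov : #{i ∈ F | |t| * T ≤ t * (f i - μ)} * exp (|t| * T + t * μ)
      ≤ ∑ i ∈ F, exp (t * f i) := by
    rw [← nsmul_eq_mul]
    refine (card_nsmul_le_sum _ _ _ fun i hi ↦ ?_).trans
      (sum_le_sum_of_subset_of_nonneg (filter_subset _ F) fun i _ _ ↦ (exp_pos _).le)
    exact exp_le_exp.2 (by linarith [(mem_filter.1 hi).2])
  refine le_of_mul_le_mul_right ?_ (exp_pos (|t| * T + t * μ))
  calc #{i ∈ F | |t| * T ≤ t * (f i - μ)} * exp (|t| * T + t * μ)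
      ≤ K * exp ((exp t - 1) * μ) := hmarkov.trans hF
    _ ≤ K * exp ((t + t ^ 2) * μ) := by gcongr
    _ = K * exp (t ^ 2 * μ - |t| * T) * exp (|t| * T + t * μ) := by
        rw [mul_assoc, ← exp_add]
        ring_nf

theorem card_le_abs_sub_le_mul_exp (hT : 0 ≤ T) (hTμ : T ≤ 2 * μ) (hK : 0 ≤ K)
    (hF : ∀ t, |t| ≤ 1 → ∑ i ∈ F, exp (t * f i) ≤ K * exp ((exp t - 1) * μ)) :
    (#{i ∈ F | T ≤ |f i - μ|} : ℝ) ≤ 2 * K * exp (-T ^ 2 / (4 * μ)) := by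
  classical
  have hμ : 0 ≤ μ := by linarith
  set t := T / (2 * μ) with ht
  have ht₀ : 0 ≤ t := by positivity
  have ht₁ : |t| ≤ 1 := by
    rw [abs_of_nonneg ht₀]
    exact div_le_one_of_le₀ hTμ (by positivity)
  have hexponent : t ^ 2 * μ - |t| * T = -T ^ 2 / (4 * μ) := by
    rw [abs_of_nonneg ht₀, ht]
    obtain rfl | hpos := hμ.eq_or_lt
    · simp
    · field_simp
      ring
  have hupper := card_mul_le_mul_sub_le_mul_exp (T := T) ht₁ hK hμ (hF t ht₁)
  have hlower := card_mul_le_mul_sub_le_mul_exp (T := T) (t := -t) (by rwa [abs_neg]) hK hμ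
    (hF (-t) (by rwa [abs_neg]))
  rw [neg_sq, abs_neg, hexponent] at hlower
  rw [hexponent] at hupper
  have hsub : {i ∈ F | T ≤ |f i - μ|} ⊆ {i ∈ F | |t| * T ≤ t * (f i - μ)}
      ∪ {i ∈ F | |t| * T ≤ -t * (f i - μ)} := by
    rw [← filter_or]
    refine monotone_filter_right F fun i _ hi ↦ ?_
    rw [abs_of_nonneg ht₀]
    obtain h | h := le_abs.1 hi
    · exact .inl (mul_le_mul_of_nonneg_left h ht₀)
    · exact .inr (by linarith [mul_le_mul_of_nonneg_left h ht₀])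
  have hcard : (#{i ∈ F | T ≤ |f i - μ|} : ℝ) ≤ #{i ∈ F | |t| * T ≤ t * (f i - μ)}
      + #{i ∈ F | |t| * T ≤ -t * (f i - μ)} :=
    mod_cast (card_le_card hsub).trans (card_union_le _ _)
  linarith

end Chernoff

/-! ### The number of prime factors of elements of `PellD` -/

theorem rpow_le_two_mul_rpow {x y s : ℝ} (hx : 0 < x) (hxy : x ≤ y) (hyx : y ≤ 2 * x)
    (hs : -1 ≤ s) : x ^ s ≤ 2 * y ^ s := by
  have hy : 0 < y := hx.trans_le hxy
  obtain hs₀ | hs₀ := le_total 0 s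
  · linarith [rpow_le_rpow hx.le hxy hs₀, rpow_nonneg hy.le s]
  · calc x ^ s ≤ (y / 2) ^ s := rpow_le_rpow_of_nonpos (by positivity) (by linarith) hs₀
      _ = 2 ^ (-s) * y ^ s := by
          rw [div_rpow hy.le zero_le_two, rpow_neg zero_le_two, div_eq_inv_mul]
      _ ≤ 2 ^ (1 : ℝ) * y ^ s := by
          gcongr
          · norm_num
          · linarith
      _ = 2 * y ^ s := by rw [rpow_one]

theorem exp_exp_one_le_ten_pow_three : exp (exp 1) ≤ 10 ^ 3 := by
  calc exp (exp 1) ≤ exp (3 : ℕ) := by gcongr; exact_mod_cast exp_one_lt_three.le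
    _ = exp 1 ^ 3 := (exp_one_pow 3).symm
    _ ≤ 10 ^ 3 := by gcongr; linarith [exp_one_lt_three]

theorem exp_neg_rpow_two_thirds_sq_div_le {L : ℝ} (hL : 1 ≤ L) :
    exp (-(L ^ (2 / 3 : ℝ)) ^ 2 / (2 * L)) ≤ 2 / L ^ (1 / 100 : ℝ) := by
  have hL₀ : 0 < L := by linarith
  have hexponent : (L ^ (2 / 3 : ℝ)) ^ 2 = L ^ (1 / 3 : ℝ) * L := by
    nth_rw 3 [← rpow_one L]
    rw [← rpow_natCast, ← rpow_mul hL₀.le, ← rpow_add hL₀]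
    norm_num
  calc exp (-(L ^ (2 / 3 : ℝ)) ^ 2 / (2 * L)) = (exp (L ^ (1 / 3 : ℝ) / 2))⁻¹ := by
        rw [hexponent, ← exp_neg]
        congr 1
        field_simp
    _ ≤ (L ^ (1 / 3 : ℝ) / 2)⁻¹ := by
        gcongr
        linarith [add_one_le_exp (L ^ (1 / 3 : ℝ) / 2)]
    _ = 2 / L ^ (1 / 3 : ℝ) := inv_div _ _
    _ ≤ 2 / L ^ (1 / 100 : ℝ) := by
        gcongr 2 / ?_
        exact rpow_le_rpow_of_exponent_le hL (by norm_num)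

namespace PellD

theorem exists_coe_upTo_eq {N : ℝ} (hN : 2 < N) :
    ∃ n : ℕ, 2 ≤ n ∧ {d ∈ PellD | (d : ℝ) < N} = upTo n ∧ log n ≤ log N ∧ log N ≤ 2 * log n := by
  have hceil : 2 < ⌈N⌉₊ := Nat.lt_ceil.2 (mod_cast hN)
  obtain ⟨n, hn⟩ : ∃ n, ⌈N⌉₊ = n + 1 := ⟨⌈N⌉₊ - 1, by lia⟩
  have hn₂ : 2 ≤ n := by lia
  have hnN : (n : ℝ) < N := Nat.lt_ceil.1 (by lia)
  have hNn : N ≤ n ^ 2 := by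
    have hle : n + 1 ≤ n ^ 2 := by nlinarith
    exact (Nat.le_ceil N).trans (by rw [hn]; exact_mod_cast hle)
  refine ⟨n, hn₂, ?_, log_le_log (by positivity) hnN.le, ?_⟩
  · ext d
    rw [Set.mem_ofPred_eq, mem_coe, mem_upTo, ← Nat.lt_ceil, hn, Nat.lt_succ_iff]
  · rw [← Nat.cast_ofNat, ← log_pow]
    exact log_le_log (by linarith) hNn

end PellD

theorem count_atypical_number_of_prime_factors_general :
    ∃ C > 0, ∀ N T : ℝ, exp 1 < N → 0 ≤ T → T ≤ log (log N) →
      ({d ∈ PellD | (d : ℝ) < N ∧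
          T ≤ |(#d.primeFactors : ℝ) - 1 / 2 * log (log N)|}.ncard : ℝ)
        ≤ C * {d ∈ PellD | (d : ℝ) < N}.ncard * exp (-T ^ 2 / (2 * log (log N))) := by
  obtain ⟨C, hC₀, hC⟩ := PellD.exists_sum_pow_card_primeFactors_le_card_upTo (exp_pos 1).le
  refine ⟨4 * C, by positivity, fun N T hN hT hTN ↦ ?_⟩
  have hlogN : 1 < log N := (lt_log_iff_exp_lt (by linarith [exp_pos 1])).2 hN
  obtain ⟨n, hn, hset, hle, hge⟩ := PellD.exists_coe_upTo_eq (N := N)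
    (by linarith [add_one_le_exp 1])
  have hlogn : 0 < log n := log_pos (mod_cast hn)
  have hmoment (t : ℝ) (ht : |t| ≤ 1) : ∑ d ∈ PellD.upTo n, exp (t * #d.primeFactors)
      ≤ 2 * C * #(PellD.upTo n) * exp ((exp t - 1) * (1 / 2 * log (log N))) := by
    calc ∑ d ∈ PellD.upTo n, exp (t * #d.primeFactors)
        = ∑ d ∈ PellD.upTo n, exp t ^ #d.primeFactors := by
          simp only [← exp_nat_mul, mul_comm]
      _ ≤ C * #(PellD.upTo n) * log n ^ ((exp t - 1) / 2) :=
          hC n hn _ (exp_pos t).le (exp_le_exp.2 (abs_le.1 ht).2)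
      _ ≤ C * #(PellD.upTo n) * (2 * log N ^ ((exp t - 1) / 2)) := by
          gcongr
          exact rpow_le_two_mul_rpow hlogn hle hge (by linarith [exp_pos t])
      _ = 2 * C * #(PellD.upTo n) * exp ((exp t - 1) * (1 / 2 * log (log N))) := by
          rw [rpow_def_of_pos (by linarith)]
          ring_nf
  have hatypical : {d ∈ PellD | (d : ℝ) < N ∧
      T ≤ |(#d.primeFactors : ℝ) - 1 / 2 * log (log N)|}
        = ({d ∈ PellD.upTo n | T ≤ |(#d.primeFactors : ℝ) - 1 / 2 * log (log N)|} : Finset ℕ) := by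
    ext d
    simp only [coe_filter, Set.mem_ofPred_eq, ← mem_coe, ← hset, and_assoc]
  rw [hatypical, hset, Set.ncard_coe_finset, Set.ncard_coe_finset]
  refine (card_le_abs_sub_le_mul_exp hT (by linarith) (by positivity) hmoment).trans_eq ?_
  ring_nf

/-- The Erdős–Kac type estimate: the number of `d ∈ 𝒟(N)` with
`|ω(d) − ½ log log N| ≥ (log log N)^{2/3}` is `O(|𝒟(N)|/(log log N)^{1/100})`. -/
theorem count_atypical_number_of_prime_factors :
    ∃ C : ℝ, 0 < C ∧ ∀ N : ℝ, (10 : ℝ) ^ 1000 ≤ N →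
      (({d ∈ PellD | (d : ℝ) < N ∧
          (Real.log (Real.log N)) ^ ((2 : ℝ) / 3) ≤
            |(d.primeFactors.card : ℝ) - (1 / 2) * Real.log (Real.log N)|}.ncard : ℝ)) ≤
        C * ({d ∈ PellD | (d : ℝ) < N}.ncard : ℝ) /
          (Real.log (Real.log N)) ^ ((1 : ℝ) / 100) := by
  obtain ⟨C, hC₀, hC⟩ := count_atypical_number_of_prime_factors_general
  refine ⟨C * 2, by positivity, fun N hN ↦ ?_⟩
  have hexp : exp (exp 1) ≤ N := exp_exp_one_le_ten_pow_three.trans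
    ((pow_le_pow_right₀ (by norm_num) (by norm_num)).trans hN)
  have hlog : exp 1 ≤ log N := (le_log_iff_exp_le ((exp_pos _).trans_le hexp)).2 hexp
  have hloglog : 1 ≤ log (log N) := (le_log_iff_exp_le ((exp_pos _).trans_le hlog)).2 hlog
  refine (hC N (log (log N) ^ (2 / 3 : ℝ)) ?_ (by positivity) ?_).trans ?_
  · exact (exp_lt_exp.2 (one_lt_exp_iff.2 one_pos)).trans_le hexp
  · exact rpow_le_self_of_one_le hloglog (by norm_num)
  · rw [mul_right_comm C 2, mul_div_assoc]
    gcongr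
    exact exp_neg_rpow_two_thirds_sq_div_le hloglog
end

section
/- Let X₁, …, X_r be nonempty finite sets with product X, let S ⊆ [r], and let (C_T, C_T^acc, F_T, A_T)_{T⊆S} be an additive system on (X,S) such that |A_T| ≤ a for all T ⊆ S (a ≥ 1 a real number). Write δ := |C_∅^acc|/|X|. Then |C_S^acc| / |Cube(X,S)| ≥ δ^{2^{|S|}} · a^{−3^{|S|}}. -/
/-- `Cube(X,S)`: pairs of points of `X = ∏ᵢ Xᵢ` that agree in all coordinates outside `S`.
(This identifies `∏_{i∈S} Xᵢ² × ∏_{i∉S} Xᵢ` with pairs agreeing off `S`; for `i ∈ S` the two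
coordinate projections `pr₁, pr₂` are `x.1.1 i` and `x.1.2 i`.) -/
abbrev Cube {r : ℕ} (X : Fin r → Type*) (S : Finset (Fin r)) : Type _ :=
  {p : ((i : Fin r) → X i) × ((i : Fin r) → X i) // ∀ i ∉ S, p.1 i = p.2 i}

/-- `x̄(T)` for `x̄ ∈ Cube(X,S)` and `T ⊆ S`: those `ȳ ∈ Cube(X,T)` whose `i`-th coordinate,
for `i ∈ S ∖ T`, is one of the two `i`-th coordinates of `x̄`, and whose remaining coordinates
agree with those of `x̄`. -/
def cubeSel {r : ℕ} (X : Fin r → Type*) (S T : Finset (Fin r)) (x : Cube X S) :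
    Set (Cube X T) :=
  {y | (∀ i ∈ S, i ∉ T → (y.1.1 i = x.1.1 i ∨ y.1.1 i = x.1.2 i)) ∧
       ∀ i, i ∉ S \ T → (y.1.1 i = x.1.1 i ∧ y.1.2 i = x.1.2 i)}

/-- An additive system on `(X, S)`. -/
structure AddSystem {r : ℕ} (X : Fin r → Type*) (S : Finset (Fin r)) where
  /-- The groups `A_T` (finite `F₂`-vector spaces). -/
  A : Finset (Fin r) → Type
  instAdd : ∀ T, AddCommGroup (A T)
  /-- `A_T` is an `F₂`-vector space: every element is `2`-torsion. -/
  two_torsion : ∀ T (v : A T), (letI := instAdd T; v + v = 0)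
  instFin : ∀ T, Finite (A T)
  /-- The sets `C_T ⊆ Cube(X,T)`. -/
  C : ∀ T : Finset (Fin r), Set (Cube X T)
  /-- The maps `F_T` (only the values on `C_T` are relevant). -/
  F : ∀ T, Cube X T → A T
  /-- For nonempty `T ⊆ S`, `C_T` consists of the cubes all of whose codimension-one
  subcubes are accepted. -/
  hC : ∀ T : Finset (Fin r), T ⊆ S → T.Nonempty →
    C T = {x : Cube X T | ∀ i ∈ T, ∀ y ∈ cubeSel X T (T.erase i) x,
      y ∈ C (T.erase i) ∧ (letI := instAdd (T.erase i); F (T.erase i) y = 0)}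
  /-- Additivity of `F_T` in each coordinate. -/
  hAdd : ∀ T : Finset (Fin r), T ⊆ S → ∀ x₁ x₂ x₃ : Cube X T,
    x₁ ∈ C T → x₂ ∈ C T → x₃ ∈ C T → ∀ i ∈ T,
    (∀ j, j ≠ i → x₁.1.1 j = x₂.1.1 j ∧ x₁.1.2 j = x₂.1.2 j ∧
      x₂.1.1 j = x₃.1.1 j ∧ x₂.1.2 j = x₃.1.2 j) →
    x₁.1.2 i = x₂.1.1 i → x₁.1.1 i = x₃.1.1 i → x₂.1.2 i = x₃.1.2 i →
    (letI := instAdd T; F T x₁ + F T x₂ = F T x₃)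

/-- `C_T^acc = {x̄ ∈ C_T : F_T(x̄) = 0}`. -/
def AddSystem.Cacc {r : ℕ} {X : Fin r → Type*} {S : Finset (Fin r)} (𝔄 : AddSystem X S)
    (T : Finset (Fin r)) : Set (Cube X T) :=
  {x ∈ 𝔄.C T | letI := 𝔄.instAdd T; 𝔄.F T x = 0}

/-!
Fix a cube `w` with direction set `T` and a new direction `s ∉ T`. Whether `w` with its coordinate
`s` set to the pair `(p, q)` lies in `C` is a symmetric and transitive relation between `p` and `q`,
on which `F` is a cocycle; hence `F` has the form `-φ p + φ q`. Colour `p` by the values at `p` of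
the potentials `φ` of all faces of `w`: there are at most `3 ^ |T|` faces, so at most `a ^ 3 ^ |T|`
colours. If `p` and `q` have the same colour and both give accepted cubes, then, by induction on the
faces of `w`, the pair `(p, q)` gives an accepted cube as well. By Cauchy–Schwarz, first over the
colours and then over `w`, the densities of the accepted cubes satisfy
`δ_T ^ 2 ≤ a ^ 3 ^ |T| * δ_{T ∪ {s}}`, and this is iterated from `∅` to `S`.
-/

attribute [local instance] AddSystem.instAdd AddSystem.instFin

section RelDensity

variable {α β γ K : Type*}

/-- The density `|Q| / |α|` of a subset `Q` of a finite type `α`. -/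
noncomputable def relDensity (Q : Set α) : ℝ :=
  (Q.ncard : ℝ) / (Nat.card α : ℝ)

lemma relDensity_nonneg (Q : Set α) : 0 ≤ relDensity Q := by
  unfold relDensity
  positivity

lemma relDensity_mono [Finite α] {Q R : Set α} (h : Q ⊆ R) : relDensity Q ≤ relDensity R := by
  unfold relDensity
  gcongr
  exact R.toFinite

lemma relDensity_preimage_equiv (e : α ≃ β) (Q : Set β) :
    relDensity (e ⁻¹' Q) = relDensity Q := by
  rw [relDensity, relDensity, Nat.card_congr e,
    Set.ncard_preimage_of_injective_subset_range e.injective (by simp)]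

lemma relDensity_preimage_fst [Finite β] [Nonempty β] (Q : Set α) :
    relDensity (Prod.fst ⁻¹' Q : Set (α × β)) = relDensity Q := by
  have hβ : (Nat.card β : ℝ) ≠ 0 := by exact_mod_cast Nat.card_pos.ne'
  rw [relDensity, relDensity, ← Set.prod_univ, Set.ncard_prod, Set.ncard_univ, Nat.card_prod]
  push_cast
  exact mul_div_mul_right _ _ hβ

lemma ncard_eq_sum_ncard_fiber [Finite α] [Fintype K] (Q : Set α) (f : α → K) :
    Q.ncard = ∑ k, {x ∈ Q | f x = k}.ncard := by
  classical
  have := Fintype.ofFinite α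
  simp only [Set.ncard_eq_toFinset_card']
  rw [Finset.card_eq_sum_card_fiberwise (f := f) (t := Finset.univ) (fun _ _ => by simp)]
  refine Finset.sum_congr rfl fun k _ => congrArg Finset.card ?_
  ext x
  simp

lemma ncard_eq_sum_ncard_section [Fintype α] [Finite β] (R : Set (α × β)) :
    R.ncard = ∑ x, {y | (x, y) ∈ R}.ncard := by
  rw [ncard_eq_sum_ncard_fiber R Prod.fst]
  refine Finset.sum_congr rfl fun x _ => ?_
  rw [← Set.ncard_image_of_injective {y | (x, y) ∈ R} (Prod.mk_right_injective x)]
  refine congrArg Set.ncard (Set.ext fun z => ?_)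
  simp only [Set.mem_ofPred_eq, Set.mem_image, Prod.ext_iff]
  grind

lemma relDensity_eq_average_section [Fintype α] [Finite β] (R : Set (α × β)) :
    relDensity R = (∑ x, relDensity {y | (x, y) ∈ R}) / Fintype.card α := by
  simp only [relDensity, ncard_eq_sum_ncard_section R, Nat.card_prod, Nat.card_eq_fintype_card,
    Nat.cast_sum, Nat.cast_mul, ← Finset.sum_div, div_div, mul_comm]

lemma relDensity_sq_le_of_section [Finite α] [Finite β] [Finite γ]
    {R : Set (α × β)} {R' : Set (α × γ)} {b : ℝ}
    (h : ∀ x, relDensity {y | (x, y) ∈ R} ^ 2 ≤ b * relDensity {y | (x, y) ∈ R'}) :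
    relDensity R ^ 2 ≤ b * relDensity R' := by
  have := Fintype.ofFinite α
  rw [relDensity_eq_average_section R, relDensity_eq_average_section R', ← mul_div_assoc,
    Finset.mul_sum]
  calc ((∑ x, relDensity {y | (x, y) ∈ R}) / Fintype.card α) ^ 2
      ≤ (∑ x, relDensity {y | (x, y) ∈ R} ^ 2) / Fintype.card α :=
        sum_div_card_sq_le_sum_sq_div_card
    _ ≤ (∑ x, b * relDensity {y | (x, y) ∈ R'}) / Fintype.card α := by
        gcongr with x
        exact h x

lemma relDensity_sq_le_card_mul_monochromatic [Finite α] [Finite K] (Y : Set α) (c : α → K) :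
    relDensity Y ^ 2 ≤
      Nat.card K * relDensity {p : α × α | p.1 ∈ Y ∧ p.2 ∈ Y ∧ c p.1 = c p.2} := by
  have := Fintype.ofFinite K
  have hpairs : {p : α × α | p.1 ∈ Y ∧ p.2 ∈ Y ∧ c p.1 = c p.2}.ncard =
      ∑ k, {x ∈ Y | c x = k}.ncard ^ 2 := by
    rw [ncard_eq_sum_ncard_fiber _ (fun p => c p.1)]
    refine Finset.sum_congr rfl fun k _ => ?_
    rw [sq, ← Set.ncard_prod]
    refine congrArg Set.ncard (Set.ext fun p => ?_)
    simp only [Set.mem_ofPred_eq, Set.mem_prod]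
    grind
  have hcount : (Y.ncard : ℝ) ^ 2 ≤
      Nat.card K * {p : α × α | p.1 ∈ Y ∧ p.2 ∈ Y ∧ c p.1 = c p.2}.ncard := by
    rw [hpairs, ncard_eq_sum_ncard_fiber Y c, Nat.card_eq_fintype_card]
    exact_mod_cast sq_sum_le_card_mul_sum_sq
  rw [relDensity, relDensity, Nat.card_prod, Nat.cast_mul, ← sq, div_pow, ← mul_div_assoc]
  gcongr

end RelDensity

section Cocycle

variable {P A : Type*} [AddGroup A]

/- Fix a base point in each class of `R` and read `f` off from there. -/
lemma exists_potential_of_additive {R : P → P → Prop} (symm : ∀ p q, R p q → R q p)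
    (trans : ∀ p q t, R p q → R q t → R p t) {f : P → P → A}
    (add : ∀ p q t, R p q → R q t → R p t → f p q + f q t = f p t) :
    ∃ φ : P → A, ∀ p q, R p q → f p q = -φ p + φ q := by
  classical
  let base (p : P) : P := if h : ∃ b, R b p then h.choose else p
  have base_rel {p q : P} (h : R p q) : R (base p) p := by
    have hp : ∃ b, R b p := ⟨q, symm p q h⟩
    simpa only [base, dif_pos hp] using hp.choose_spec
  have base_eq {p q : P} (h : R p q) : base p = base q := by
    have hpq : (fun b => R b p) = fun b => R b q :=
      funext fun b => propext ⟨fun hb => trans b p q hb h, fun hb => trans b q p hb (symm p q h)⟩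
    have hp : ∃ b, R b p := ⟨q, symm p q h⟩
    have hq : ∃ b, R b q := ⟨p, h⟩
    simp only [base, dif_pos hp, dif_pos hq, hpq]
  refine ⟨fun p => f (base p) p, fun p q h => ?_⟩
  have hbq : R (base p) q := trans _ p q (base_rel h) h
  simp only [← base_eq h, ← add _ p q (base_rel h) h hbq, neg_add_cancel_left]

end Cocycle

section Cubes

variable {r : ℕ} {X : Fin r → Type*} {S T U V : Finset (Fin r)} {s : Fin r}

namespace Cube

lemma ext_coord {x y : Cube X T} (h : ∀ i, x.1.1 i = y.1.1 i ∧ x.1.2 i = y.1.2 i) : x = y :=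
  Subtype.ext (Prod.ext (funext fun i => (h i).1) (funext fun i => (h i).2))

/-- The cube obtained from `w` by setting its coordinate `s` to `p`. It is meant for `s ∉ T`. -/
def update (s : Fin r) (p : X s) (w : Cube X T) : Cube X T :=
  ⟨(Function.update w.1.1 s p, Function.update w.1.2 s p), fun i hi => by
    by_cases h : i = s
    · subst h; simp
    · simp [h, w.2 i hi]⟩

/-- The cube obtained from `w` by setting its coordinate `s` to the pair `(p, q)`, which makes `s`
one of its directions. It is meant for `s ∉ T`. -/
def double (s : Fin r) (p q : X s) (w : Cube X T) : Cube X (insert s T) :=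
  ⟨(Function.update w.1.1 s p, Function.update w.1.2 s q), fun i hi => by
    rw [Finset.mem_insert, not_or] at hi
    simp [hi.1, w.2 i hi.2]⟩

/-- The cube obtained from `y` by setting its coordinate `s` to `p`, so that `s` is no longer one
of its directions. -/
def collapse (s : Fin r) (p : X s) (y : Cube X (insert s T)) : Cube X T :=
  ⟨(Function.update y.1.1 s p, Function.update y.1.2 s p), fun i hi => by
    by_cases h : i = s
    · subst h; simp
    · simp [h, y.2 i (by simp [h, hi])]⟩

lemma double_collapse (p : X s) (y : Cube X (insert s T)) :
    double s (y.1.1 s) (y.1.2 s) (collapse s p y) = y := by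
  simp [double, collapse]

lemma collapse_double (hs : s ∉ T) (p q : X s) (w : Cube X T) :
    collapse s (w.1.1 s) (double s p q w) = w := by
  apply Subtype.ext
  simp only [collapse, double, Function.update_idem, Function.update_eq_self]
  rw [w.2 s hs, Function.update_eq_self]

/-- Sampling a cube and then resampling its coordinate `s` amounts to sampling a cube. -/
def updateEquiv (hs : s ∉ T) : Cube X T × X s ≃ Cube X T × X s :=
  Function.Involutive.toPerm (fun x => (update s x.2 x.1, x.1.1.1 s)) fun x => by
    have h := x.1.2 s hs
    refine Prod.ext (Subtype.ext (Prod.ext ?_ ?_)) ?_ <;> simp [update, h]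

/-- Sampling a cube and then resampling its coordinate `s` as a pair amounts to sampling a cube
which has `s` as one of its directions. -/
def doubleEquiv (hs : s ∉ T) : Cube X T × (X s × X s) ≃ Cube X (insert s T) × X s where
  toFun x := (double s x.2.1 x.2.2 x.1, x.1.1.1 s)
  invFun x := (collapse s x.2 x.1, (x.1.1.1 s, x.1.1.2 s))
  left_inv x := Prod.ext (collapse_double hs _ _ _) (by simp [double])
  right_inv x := Prod.ext (double_collapse _ _) (by simp [collapse])

/-- A cube with no directions is a point of `X`. -/
def emptyEquiv : Cube X ∅ ≃ ((i : Fin r) → X i) where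
  toFun x := x.1.1
  invFun x := ⟨(x, x), fun _ _ => rfl⟩
  left_inv x := ext_coord fun i => ⟨rfl, x.2 i (Finset.notMem_empty i)⟩
  right_inv _ := rfl

end Cube

open Cube

section Faces

lemma self_mem_cubeSel (w : Cube X T) : w ∈ cubeSel X T T w :=
  ⟨fun _ h h' => absurd h h', fun _ _ => ⟨rfl, rfl⟩⟩

lemma mem_cubeSel_iff {x : Cube X T} {y : Cube X U} :
    y ∈ cubeSel X T U x ↔ ∀ i,
      (i ∈ T → i ∉ U → y.1.1 i = x.1.1 i ∨ y.1.1 i = x.1.2 i) ∧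
      (i ∉ T ∨ i ∈ U → y.1.1 i = x.1.1 i ∧ y.1.2 i = x.1.2 i) := by
  simp only [cubeSel, Set.mem_ofPred_eq, Finset.mem_sdiff, not_and_or, not_not, forall_and]

lemma cubeSel_trans (hUT : U ⊆ T) (hVU : V ⊆ U) {x : Cube X T} {y : Cube X U} {z : Cube X V}
    (hy : y ∈ cubeSel X T U x) (hz : z ∈ cubeSel X U V y) : z ∈ cubeSel X T V x := by
  rw [mem_cubeSel_iff] at *
  intro i
  by_cases hi : i ∈ U <;> grind

lemma exists_mem_cubeSel_between (hUV : U ⊆ V) {x : Cube X T} {y : Cube X U}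
    (hy : y ∈ cubeSel X T U x) : ∃ z ∈ cubeSel X T V x, y ∈ cubeSel X V U z := by
  refine ⟨⟨(fun i => if i ∈ V then x.1.1 i else y.1.1 i,
    fun i => if i ∈ V then x.1.2 i else y.1.1 i), fun i hi => by simp [hi]⟩, ?_, ?_⟩
  all_goals
    rw [mem_cubeSel_iff] at *
    intro i
    have hyi := hy i
    have hyU := y.2 i
    by_cases hi : i ∈ V <;> simp only [hi, if_true, if_false] <;> grind

lemma update_mem_cubeSel (p : X s) {w : Cube X T} {v : Cube X U}
    (hv : v ∈ cubeSel X T U w) : update s p v ∈ cubeSel X T U (update s p w) := by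
  rw [mem_cubeSel_iff] at *
  intro i
  obtain rfl | hi := eq_or_ne i s
  · simp [update]
  · simpa only [update, Function.update_of_ne hi] using hv i

lemma mem_cubeSel_double_iff_eq_update (hs : s ∉ T) {p q : X s} {w y : Cube X T} :
    y ∈ cubeSel X (insert s T) T (double s p q w) ↔ y = update s p w ∨ y = update s q w := by
  have eq_update_iff (t : X s) : y = update s t w ↔
      y.1.1 s = t ∧ ∀ i, i ≠ s → y.1.1 i = w.1.1 i ∧ y.1.2 i = w.1.2 i := by
    constructor
    · rintro rfl
      simp +contextual [update]
    · rintro ⟨hys, hy⟩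
      refine ext_coord fun i => ?_
      obtain rfl | hi := eq_or_ne i s
      · simp [update, hys, ← y.2 i hs]
      · simpa [update, hi] using hy i hi
  rw [eq_update_iff, eq_update_iff, ← or_and_right, mem_cubeSel_iff]
  constructor
  · intro h
    refine ⟨by simpa [double] using (h s).1 (Finset.mem_insert_self s T) hs, fun i hi => ?_⟩
    simpa [double, hi] using (h i).2 (by simp [hi, em'])
  · rintro ⟨hys, hy⟩ i
    obtain rfl | hi := eq_or_ne i s
    · simpa [double, hs] using hys
    · simpa [double, hi] using ⟨fun h h' => absurd h h', fun _ => hy i hi⟩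

lemma mem_cubeSel_double_iff_eq_double (hs : s ∉ T) {p q : X s} {w : Cube X T}
    {y : Cube X (insert s U)} :
    y ∈ cubeSel X (insert s T) (insert s U) (double s p q w) ↔
      ∃ v ∈ cubeSel X T U w, y = double s p q v := by
  simp only [mem_cubeSel_iff]
  constructor
  · intro h
    have hys : y.1.1 s = p ∧ y.1.2 s = q := by simpa [double] using (h s).2
    refine ⟨collapse s (w.1.1 s) y, fun i => ?_, ?_⟩
    · obtain rfl | hi := eq_or_ne i s
      · simp [collapse, w.2 i hs]
      · simpa [collapse, double, hi] using h i
    · rw [← hys.1, ← hys.2, double_collapse]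
  · rintro ⟨v, hv, rfl⟩ i
    obtain rfl | hi := eq_or_ne i s
    · simp [double]
    · simpa [double, hi] using hv i

lemma eq_of_mem_cubeSel {w : Cube X T} {u v : Cube X U} (hu : u ∈ cubeSel X T U w)
    (hv : v ∈ cubeSel X T U w)
    (h : ∀ i ∈ T, i ∉ U → (u.1.1 i = w.1.1 i ↔ v.1.1 i = w.1.1 i)) : u = v := by
  rw [mem_cubeSel_iff] at hu hv
  have frozen_coord (i) (hi : i ∉ U) : u.1.1 i = v.1.1 i := by
    by_cases hiT : i ∈ T
    · grind
    · rw [((hu i).2 (.inl hiT)).1, ((hv i).2 (.inl hiT)).1]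
  refine ext_coord fun i => ?_
  by_cases hi : i ∈ U
  · grind
  · exact ⟨frozen_coord i hi, by rw [← u.2 i hi, ← v.2 i hi, frozen_coord i hi]⟩

/-- The type of all faces of `w`, i.e. of pairs `(U, v)` with `U ⊆ T` and `v ∈ w(U)`. -/
abbrev Face (w : Cube X T) : Type _ :=
  {f : Σ U : Finset (Fin r), Cube X U // f.1 ⊆ T ∧ f.2 ∈ cubeSel X T f.1 w}

/- Each direction of `w` is either kept by a face or frozen at one of its two end points. -/
lemma card_face_le (w : Cube X T) : Nat.card (Face w) ≤ 3 ^ T.card := by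
  classical
  let pattern (f : Face w) (i : T) : Option Prop :=
    if i.1 ∈ f.1.1 then none else some (f.1.2.1.1 i = w.1.1 i)
  have pattern_injective : Function.Injective pattern := by
    rintro ⟨⟨U, u⟩, hU, hu⟩ ⟨⟨V, v⟩, hV, hv⟩ h
    have hpattern (i) (hi : i ∈ T) := congrFun h ⟨i, hi⟩
    simp only [pattern] at hU hu hV hv hpattern
    obtain rfl : U = V := Finset.ext fun i => by have := hpattern i; grind
    obtain rfl : u = v := eq_of_mem_cubeSel hu hv fun i hi hiU => by
      simpa only [hiU, if_false, Option.some_inj, eq_iff_iff] using hpattern i hi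
    rfl
  simpa using Nat.card_le_card_of_injective pattern pattern_injective

end Faces

section AdditiveSystem

variable {A : Finset (Fin r) → Type*} [∀ T, AddGroup (A T)]
  {C : ∀ T, Set (Cube X T)} {F : ∀ T, Cube X T → A T}

/-- The set of accepted cubes, `{x ∈ C_T : F_T(x) = 0}`. -/
def acceptedCubes (C : ∀ T, Set (Cube X T)) (F : ∀ T, Cube X T → A T) (T : Finset (Fin r)) :
    Set (Cube X T) :=
  {x ∈ C T | F T x = 0}

/-- The axioms of an additive system on `(X, S)`, for maps `F_T` with values in arbitrary, possibly
noncommutative, groups. The three cubes in the additivity axiom are written as `double s _ _ w`. -/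
structure IsAdditiveSystem (S : Finset (Fin r)) (C : ∀ T, Set (Cube X T))
    (F : ∀ T, Cube X T → A T) : Prop where
  mem_iff : ∀ ⦃T⦄, T ⊆ S → T.Nonempty → ∀ x, x ∈ C T ↔
    ∀ i ∈ T, ∀ y ∈ cubeSel X T (T.erase i) x, y ∈ acceptedCubes C F (T.erase i)
  add : ∀ ⦃T s⦄, s ∉ T → insert s T ⊆ S → ∀ (w : Cube X T) (p q t : X s),
    double s p q w ∈ C (insert s T) → double s q t w ∈ C (insert s T) →
    double s p t w ∈ C (insert s T) →
    F _ (double s p q w) + F _ (double s q t w) = F _ (double s p t w)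

lemma AddSystem.isAdditiveSystem (𝔄 : AddSystem X S) : IsAdditiveSystem S 𝔄.C 𝔄.F where
  mem_iff T hT hne x := by
    rw [𝔄.hC T hT hne]
    rfl
  add T s _ hT w p q t hpq hqt hpt :=
    𝔄.hAdd _ hT _ _ _ hpq hqt hpt s (Finset.mem_insert_self s T)
      (fun j hj => by simp [double, hj]) (by simp [double]) (by simp [double]) (by simp [double])

namespace IsAdditiveSystem

variable {w : Cube X T} {p q t : X s}

lemma face_mem_accepted (h : IsAdditiveSystem S C F) (hT : T ⊆ S) (hUT : U ⊂ T) {x : Cube X T}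
    {y : Cube X U} (hx : x ∈ C T) (hy : y ∈ cubeSel X T U x) : y ∈ acceptedCubes C F U := by
  induction T using Finset.strongInduction with
  | H T ih =>
    obtain ⟨i, hiT, hiU⟩ := Finset.exists_of_ssubset hUT
    have hUi : U ⊆ T.erase i := Finset.subset_erase.2 ⟨hUT.subset, hiU⟩
    have hface := (h.mem_iff hT ⟨i, hiT⟩ x).1 hx i hiT
    obtain rfl | hlt := hUi.eq_or_ssubset
    · exact hface y hy
    · obtain ⟨z, hz, hyz⟩ := exists_mem_cubeSel_between hUi hy
      exact ih _ (Finset.erase_ssubset hiT) ((Finset.erase_subset i T).trans hT) hlt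
        (hface z hz).1 hyz

lemma update_face_mem_accepted (h : IsAdditiveSystem S C F) (hT : T ⊆ S) (hUT : U ⊂ T)
    {v : Cube X U} (hv : v ∈ cubeSel X T U w) (hp : update s p w ∈ acceptedCubes C F T) :
    update s p v ∈ acceptedCubes C F U :=
  h.face_mem_accepted hT hUT hp.1 (update_mem_cubeSel p hv)

lemma double_face_mem_accepted (h : IsAdditiveSystem S C F) (hs : s ∉ T) (hT : insert s T ⊆ S)
    (hUT : U ⊂ T) {v : Cube X U} (hv : v ∈ cubeSel X T U w)
    (hpq : double s p q w ∈ C (insert s T)) :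
    double s p q v ∈ acceptedCubes C F (insert s U) :=
  have hlt : insert s U ⊂ insert s T :=
    ⟨Finset.insert_subset_insert s hUT.subset, mt (Finset.insert_subset_insert_iff hs).1 hUT.2⟩
  h.face_mem_accepted hT hlt hpq ((mem_cubeSel_double_iff_eq_double hs).2 ⟨v, hv, rfl⟩)

lemma double_mem_iff (h : IsAdditiveSystem S C F) (hs : s ∉ T) (hT : insert s T ⊆ S) :
    double s p q w ∈ C (insert s T) ↔
      update s p w ∈ acceptedCubes C F T ∧ update s q w ∈ acceptedCubes C F T ∧
      ∀ i ∈ T, ∀ v ∈ cubeSel X T (T.erase i) w,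
        double s p q v ∈ acceptedCubes C F (insert s (T.erase i)) := by
  rw [h.mem_iff hT (Finset.insert_nonempty s T), Finset.forall_mem_insert,
    Finset.erase_insert hs, ← and_assoc]
  simp only [mem_cubeSel_double_iff_eq_update hs, forall_eq_or_imp, forall_eq]
  refine and_congr_right' (forall₂_congr fun i hi => ?_)
  rw [Finset.erase_insert_of_ne (ne_of_mem_of_not_mem hi hs).symm]
  simp only [mem_cubeSel_double_iff_eq_double hs, forall_exists_index, and_imp]
  grind

lemma double_mem_of_forall_proper_face (h : IsAdditiveSystem S C F) (hs : s ∉ T)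
    (hT : insert s T ⊆ S) (hp : update s p w ∈ acceptedCubes C F T)
    (hq : update s q w ∈ acceptedCubes C F T)
    (hF : ∀ U ⊂ T, ∀ v ∈ cubeSel X T U w, double s p q v ∈ C (insert s U) →
      F (insert s U) (double s p q v) = 0) :
    double s p q w ∈ C (insert s T) := by
  induction T using Finset.strongInduction with
  | H T ih =>
    refine (h.double_mem_iff hs hT).2 ⟨hp, hq, fun i hi v hv => ?_⟩
    have hlt : T.erase i ⊂ T := Finset.erase_ssubset hi
    have hTS : T ⊆ S := (Finset.subset_insert s T).trans hT
    have hmem : double s p q v ∈ C (insert s (T.erase i)) :=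
      ih _ hlt (fun hsi => hs (hlt.subset hsi))
        ((Finset.insert_subset_insert s hlt.subset).trans hT)
        (h.update_face_mem_accepted hTS hlt hv hp) (h.update_face_mem_accepted hTS hlt hv hq)
        fun U hU u hu => hF U (hU.trans hlt) u (cubeSel_trans hlt.subset hU.subset hv hu)
    exact ⟨hmem, hF _ hlt v hv hmem⟩

lemma double_mem_accepted_of_forall_face (h : IsAdditiveSystem S C F) (hs : s ∉ T)
    (hT : insert s T ⊆ S) (hp : update s p w ∈ acceptedCubes C F T)
    (hq : update s q w ∈ acceptedCubes C F T)
    (hF : ∀ U ⊆ T, ∀ v ∈ cubeSel X T U w, double s p q v ∈ C (insert s U) →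
      F (insert s U) (double s p q v) = 0) :
    double s p q w ∈ acceptedCubes C F (insert s T) :=
  have hmem := h.double_mem_of_forall_proper_face hs hT hp hq fun U hU => hF U hU.subset
  ⟨hmem, hF T subset_rfl w (self_mem_cubeSel w) hmem⟩

lemma map_double_self (h : IsAdditiveSystem S C F) (hs : s ∉ T) (hT : insert s T ⊆ S)
    (hpp : double s p p w ∈ C (insert s T)) : F (insert s T) (double s p p w) = 0 :=
  add_eq_left.1 (h.add hs hT w p p p hpp hpp hpp)

lemma double_self_mem (h : IsAdditiveSystem S C F) (hs : s ∉ T) (hT : insert s T ⊆ S)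
    (hp : update s p w ∈ acceptedCubes C F T) : double s p p w ∈ C (insert s T) :=
  h.double_mem_of_forall_proper_face hs hT hp hp fun _ hU _ _ =>
    h.map_double_self (fun hsU => hs (hU.subset hsU))
      ((Finset.insert_subset_insert s hU.subset).trans hT)

lemma double_mem_symm (h : IsAdditiveSystem S C F) (hs : s ∉ T) (hT : insert s T ⊆ S)
    (hpq : double s p q w ∈ C (insert s T)) : double s q p w ∈ C (insert s T) := by
  obtain ⟨hp, hq, -⟩ := (h.double_mem_iff hs hT).1 hpq
  refine h.double_mem_of_forall_proper_face hs hT hq hp fun U hU v hv hqp => ?_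
  have hsU : s ∉ U := fun hsU => hs (hU.subset hsU)
  have hUS : insert s U ⊆ S := (Finset.insert_subset_insert s hU.subset).trans hT
  have hpqv := h.double_face_mem_accepted hs hT hU hv hpq
  have hppv : double s p p v ∈ C (insert s U) := h.double_self_mem hsU hUS
    (h.update_face_mem_accepted ((Finset.subset_insert s T).trans hT) hU hv hp)
  simpa only [hpqv.2, h.map_double_self hsU hUS hppv, zero_add] using
    h.add hsU hUS v p q p hpqv.1 hqp hppv

lemma double_mem_trans (h : IsAdditiveSystem S C F) (hs : s ∉ T) (hT : insert s T ⊆ S)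
    (hpq : double s p q w ∈ C (insert s T)) (hqt : double s q t w ∈ C (insert s T)) :
    double s p t w ∈ C (insert s T) := by
  refine h.double_mem_of_forall_proper_face hs hT ((h.double_mem_iff hs hT).1 hpq).1
    ((h.double_mem_iff hs hT).1 hqt).2.1 fun U hU v hv hpt => ?_
  have hsU : s ∉ U := fun hsU => hs (hU.subset hsU)
  have hUS : insert s U ⊆ S := (Finset.insert_subset_insert s hU.subset).trans hT
  have hpqv := h.double_face_mem_accepted hs hT hU hv hpq
  have hqtv := h.double_face_mem_accepted hs hT hU hv hqt
  rw [← h.add hsU hUS v p q t hpqv.1 hqtv.1 hpt, hpqv.2, hqtv.2, zero_add]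

lemma exists_potential (h : IsAdditiveSystem S C F) (hs : s ∉ T) (hT : insert s T ⊆ S)
    (w : Cube X T) : ∃ φ : X s → A (insert s T), ∀ p q, double s p q w ∈ C (insert s T) →
      F (insert s T) (double s p q w) = -φ p + φ q :=
  exists_potential_of_additive (R := fun p q => double s p q w ∈ C (insert s T))
    (fun _ _ => h.double_mem_symm hs hT) (fun _ _ _ => h.double_mem_trans hs hT)
    (h.add hs hT w)

lemma relDensity_fiber_sq_le [∀ i, Finite (X i)] [∀ T, Finite (A T)]
    (h : IsAdditiveSystem S C F) {a : ℝ} (ha : 1 ≤ a) (hA : ∀ T ⊆ S, (Nat.card (A T) : ℝ) ≤ a)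
    (hs : s ∉ T) (hT : insert s T ⊆ S) (w : Cube X T) :
    relDensity {p : X s | update s p w ∈ acceptedCubes C F T} ^ 2 ≤
      a ^ 3 ^ T.card * relDensity {x : X s × X s |
        double s x.1 x.2 w ∈ acceptedCubes C F (insert s T)} := by
  have hface (f : Face w) : s ∉ f.1.1 ∧ insert s f.1.1 ⊆ S :=
    ⟨fun hsf => hs (f.2.1 hsf), (Finset.insert_subset_insert s f.2.1).trans hT⟩
  have := Fintype.ofFinite (Face w)
  choose φ hφ using fun f : Face w => h.exists_potential (hface f).1 (hface f).2 f.1.2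
  let colour (p : X s) (f : Face w) : A (insert s f.1.1) := φ f p
  have card_colours_le : (Nat.card (∀ f : Face w, A (insert s f.1.1)) : ℝ) ≤ a ^ 3 ^ T.card := by
    calc (Nat.card (∀ f : Face w, A (insert s f.1.1)) : ℝ)
        = ∏ f : Face w, (Nat.card (A (insert s f.1.1)) : ℝ) := by rw [Nat.card_pi, Nat.cast_prod]
      _ ≤ ∏ _f : Face w, a :=
        Finset.prod_le_prod (fun _ _ => Nat.cast_nonneg _) fun f _ => hA _ (hface f).2
      _ = a ^ Nat.card (Face w) := by
        rw [Finset.prod_const, Finset.card_univ, Nat.card_eq_fintype_card]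
      _ ≤ a ^ 3 ^ T.card := pow_le_pow_right₀ ha (card_face_le w)
  refine (relDensity_sq_le_card_mul_monochromatic _ colour).trans ?_
  refine mul_le_mul card_colours_le (relDensity_mono ?_) (relDensity_nonneg _) (by positivity)
  rintro ⟨p, q⟩ ⟨hp, hq, hpq⟩
  refine h.double_mem_accepted_of_forall_face hs hT hp hq fun U hU v hv hmem => ?_
  have hφpq : φ ⟨⟨U, v⟩, hU, hv⟩ p = φ ⟨⟨U, v⟩, hU, hv⟩ q := congrFun hpq _
  rw [hφ ⟨⟨U, v⟩, hU, hv⟩ p q hmem, hφpq, neg_add_cancel]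

lemma relDensity_sq_le_insert [∀ i, Finite (X i)] [∀ i, Nonempty (X i)] [∀ T, Finite (A T)]
    (h : IsAdditiveSystem S C F) {a : ℝ} (ha : 1 ≤ a) (hA : ∀ T ⊆ S, (Nat.card (A T) : ℝ) ≤ a)
    (hs : s ∉ T) (hT : insert s T ⊆ S) :
    relDensity (acceptedCubes C F T) ^ 2 ≤
      a ^ 3 ^ T.card * relDensity (acceptedCubes C F (insert s T)) := by
  rw [← relDensity_preimage_fst (β := X s) (acceptedCubes C F T),
    ← relDensity_preimage_equiv (updateEquiv hs),
    ← relDensity_preimage_fst (β := X s) (acceptedCubes C F (insert s T)),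
    ← relDensity_preimage_equiv (doubleEquiv hs)]
  exact relDensity_sq_le_of_section (h.relDensity_fiber_sq_le ha hA hs hT)

/- The factor `a` on the left turns the recursion `e ↦ 2 * e + 3 ^ n` for the exponent of `a` into
`3 ^ (n + 1) = 2 * 3 ^ n + 3 ^ n`. -/
lemma pow_relDensity_le [∀ i, Finite (X i)] [∀ i, Nonempty (X i)] [∀ T, Finite (A T)]
    (h : IsAdditiveSystem S C F) {a : ℝ} (ha : 1 ≤ a) (hA : ∀ T ⊆ S, (Nat.card (A T) : ℝ) ≤ a)
    (hT : T ⊆ S) :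
    (a * relDensity (acceptedCubes C F ∅)) ^ 2 ^ T.card ≤
      a ^ 3 ^ T.card * relDensity (acceptedCubes C F T) := by
  induction T using Finset.induction_on with
  | empty => simp
  | insert s T hs ih =>
    rw [Finset.card_insert_of_notMem hs]
    have hδ := relDensity_nonneg (acceptedCubes C F ∅)
    calc (a * relDensity (acceptedCubes C F ∅)) ^ 2 ^ (T.card + 1)
        = ((a * relDensity (acceptedCubes C F ∅)) ^ 2 ^ T.card) ^ 2 := by rw [pow_succ, pow_mul]
      _ ≤ (a ^ 3 ^ T.card * relDensity (acceptedCubes C F T)) ^ 2 := by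
        gcongr
        exact ih ((Finset.subset_insert s T).trans hT)
      _ = (a ^ 3 ^ T.card) ^ 2 * relDensity (acceptedCubes C F T) ^ 2 := mul_pow _ _ _
      _ ≤ (a ^ 3 ^ T.card) ^ 2 *
          (a ^ 3 ^ T.card * relDensity (acceptedCubes C F (insert s T))) := by
        gcongr
        exact h.relDensity_sq_le_insert ha hA hs hT
      _ = a ^ 3 ^ (T.card + 1) * relDensity (acceptedCubes C F (insert s T)) := by ring

end IsAdditiveSystem

theorem addSystem_density_general [∀ i, Finite (X i)] [∀ i, Nonempty (X i)] [∀ T, Finite (A T)]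
    (h : IsAdditiveSystem S C F) {a : ℝ} (ha : 1 ≤ a) (hA : ∀ T ⊆ S, (Nat.card (A T) : ℝ) ≤ a) :
    ((acceptedCubes C F ∅).ncard / Nat.card (∀ i, X i) : ℝ) ^ 2 ^ S.card * (a ^ 3 ^ S.card)⁻¹ ≤
      (acceptedCubes C F S).ncard / Nat.card (Cube X S) := by
  rw [← Nat.card_congr emptyEquiv]
  change relDensity (acceptedCubes C F ∅) ^ 2 ^ S.card * (a ^ 3 ^ S.card)⁻¹ ≤
    relDensity (acceptedCubes C F S)
  have hδ := relDensity_nonneg (acceptedCubes C F ∅)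
  rw [← div_eq_mul_inv, div_le_iff₀' (by positivity)]
  calc relDensity (acceptedCubes C F ∅) ^ 2 ^ S.card
      ≤ (a * relDensity (acceptedCubes C F ∅)) ^ 2 ^ S.card := by
        gcongr
        exact le_mul_of_one_le_left hδ ha
    _ ≤ a ^ 3 ^ S.card * relDensity (acceptedCubes C F S) := h.pow_relDensity_le ha hA subset_rfl

end AdditiveSystem

end Cubes

/-- Density propagation for additive systems:
`|C_S^acc|/|Cube(X,S)| ≥ δ^{2^{|S|}} a^{−3^{|S|}}` where `δ = |C_∅^acc|/|X|`. -/
theorem addSystem_density {r : ℕ} (X : Fin r → Type*) [∀ i, Fintype (X i)]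
    [∀ i, Nonempty (X i)] (S : Finset (Fin r)) (𝔄 : AddSystem X S)
    (a : ℝ) (ha : 1 ≤ a) (hA : ∀ T : Finset (Fin r), T ⊆ S → (Nat.card (𝔄.A T) : ℝ) ≤ a)
    (δ : ℝ) (hδ : δ = ((𝔄.Cacc ∅).ncard : ℝ) / (Nat.card ((i : Fin r) → X i) : ℝ)) :
    δ ^ (2 ^ S.card) * ((a ^ (3 ^ S.card))⁻¹) ≤
      ((𝔄.Cacc S).ncard : ℝ) / (Nat.card (Cube X S) : ℝ) := by
  subst hδ
  exact addSystem_density_general 𝔄.isAdditiveSystem ha hA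
end
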